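/- arXiv:1908.04049 — 2 statements merged into one kernel-verified Lean document; each statement's English description precedes it below -/
import Mathlib

section
/- Let n be a positive integer and β a real number. For s > 0 define F_β(s) := ∫_{S^{n−1}} |s e₁ − σ|^{β−n} dσ, where the integral (valued in [0,∞]) is taken with respect to the surface measure on the unit sphere S^{n−1} of ℝⁿ and e₁ is the first standard basis vector. Then there exist constants c, C > 0 depending only on n and β such that: (1) if β < 1, then for all s > 0 with s ≠ 1, c (1+s)^{1−n} |1−s|^{β−1} ≤ F_β(s) ≤ C (1+s)^{1−n} |1−s|^{β−1}; (2) if β = 1, then for all s > 0 with s ≠ 1, c (1 + (n−1) max(0, log(1/|1−s|))) (1+s)^{1−n} ≤ F_β(s) ≤ C (1 + (n−1) max(0, log(1/|1−s|))) (1+s)^{1−n}; (3) if β > 1, then for all s > 0, c (1+s)^{β−n} ≤ F_β(s) ≤ C (1+s)^{β−n}. -/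
open MeasureTheory Metric

/-- The integral `F_β(s) = ∫_{S^{n-1}} |s e₁ - σ|^{β-n} dσ` over the unit sphere of `ℝⁿ`
with respect to the surface measure, valued in `[0,∞]`. -/
noncomputable def sphereIntegralF (n : ℕ) (hn : 0 < n) (β s : ℝ) : ENNReal :=
  ∫⁻ σ : sphere (0 : EuclideanSpace ℝ (Fin n)) 1,
    (‖s • EuclideanSpace.single (⟨0, hn⟩ : Fin n) (1 : ℝ) -
        (σ : EuclideanSpace ℝ (Fin n))‖₊ : ENNReal) ^ (β - (n : ℝ))
    ∂ (volume : Measure (EuclideanSpace ℝ (Fin n))).toSphere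

theorem EuclideanSpace.volume_box (m : ℕ) (a b r : ℝ) :
    volume {x : EuclideanSpace ℝ (Fin (m + 1)) |
      x 0 ∈ Set.Ioo a b ∧ ∀ i : Fin m, x i.succ ∈ Set.Ioo (-r) r} =
      ENNReal.ofReal (b - a) * ENNReal.ofReal (2 * r) ^ m := by
  have h : {x : EuclideanSpace ℝ (Fin (m + 1)) |
      x 0 ∈ Set.Ioo a b ∧ ∀ i : Fin m, x i.succ ∈ Set.Ioo (-r) r} =
      (WithLp.ofLp : EuclideanSpace ℝ (Fin (m + 1)) → _) ⁻¹'
        (Set.univ.pi (Fin.cons (Set.Ioo a b) (fun _ => Set.Ioo (-r) r))) := by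
    ext x
    simp [Fin.forall_fin_succ]
  rw [h, (PiLp.volume_preserving_ofLp (Fin (m + 1))).measure_preimage_emb
    (MeasurableEquiv.toLp 2 _).symm.measurableEmbedding, volume_pi_pi, Fin.prod_univ_succ]
  simp [two_mul]

theorem sq_dist_smul_sphere {E : Type*} [NormedAddCommGroup E] [InnerProductSpace ℝ E]
    {e σ : E} (he : ‖e‖ = 1) (hσ : ‖σ‖ = 1) (s : ℝ) :
    ‖s • e - σ‖ ^ 2 = (1 - s) ^ 2 + s * ‖e - σ‖ ^ 2 := by
  rw [norm_sub_sq_real, norm_sub_sq_real, norm_smul, inner_smul_left, he, hσ]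
  simp
  ring

theorem EuclideanSpace.norm_sub_single_le_sum {m : ℕ} (x : EuclideanSpace ℝ (Fin (m + 1))) :
    ‖x - x 0 • EuclideanSpace.single 0 1‖ ≤ ∑ i : Fin m, |x i.succ| := by
  rw [EuclideanSpace.norm_eq, Fin.sum_univ_succ]
  refine Real.sqrt_le_iff.2 ⟨Finset.sum_nonneg fun _ _ => abs_nonneg _, ?_⟩
  simp
  simpa using Finset.sum_sq_le_sq_sum_of_nonneg (s := Finset.univ)
    (f := fun i : Fin m => |x i.succ|) (fun _ _ => abs_nonneg _)

theorem norm_normalize_sub_le {E : Type*} [NormedAddCommGroup E] [NormedSpace ℝ E]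
    {x e : E} (he : ‖e‖ = 1) (hx : x ≠ 0) {t : ℝ} (ht : 0 < t) :
    ‖e - ‖x‖⁻¹ • x‖ ≤ 2 * ‖x - t • e‖ / t := by
  have hx' : 0 < ‖x‖ := norm_pos_iff.2 hx
  rw [le_div_iff₀ ht]
  have h1 : ‖e - ‖x‖⁻¹ • x‖ * t = ‖(t • e - x) + ((‖x‖ - t) * ‖x‖⁻¹) • x‖ := by
    have h : ‖e - ‖x‖⁻¹ • x‖ * t = ‖t • (e - ‖x‖⁻¹ • x)‖ := by
      rw [norm_smul, Real.norm_of_nonneg ht.le, mul_comm]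
    rw [h]
    congr 1
    rw [sub_mul, mul_inv_cancel₀ hx'.ne', sub_smul, one_smul, mul_smul, smul_sub]
    abel
  have h2 : |‖x‖ - t| ≤ ‖x - t • e‖ := by
    have := abs_norm_sub_norm_le x (t • e)
    rwa [norm_smul, he, mul_one, Real.norm_of_nonneg ht.le] at this
  rw [h1]
  refine (norm_add_le _ _).trans ?_
  rw [norm_smul, norm_mul, norm_inv, norm_norm, mul_assoc, inv_mul_cancel₀ hx'.ne', mul_one,
    norm_sub_rev, Real.norm_eq_abs]
  linarith

open scoped Pointwise in
theorem exists_toSphere_cap_le (m : ℕ) :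
    ∃ A : ℝ, 0 < A ∧ ∀ r : ℝ, 0 < r →
      (volume : Measure (EuclideanSpace ℝ (Fin (m + 1)))).toSphere
        {σ | ‖EuclideanSpace.single (0 : Fin (m + 1)) (1 : ℝ) - σ.1‖ < r} ≤
        ENNReal.ofReal (A * r ^ m) := by
  refine ⟨(m + 1) * (2 * 2 ^ m), by positivity, fun r hr => ?_⟩
  rw [Measure.toSphere_apply' _ (measurableSet_lt (by fun_prop) (by fun_prop))]
  have hsub : Set.Ioo (0 : ℝ) 1 • (Subtype.val '' {σ : sphere (0 : EuclideanSpace ℝ (Fin (m + 1))) 1 |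
        ‖EuclideanSpace.single (0 : Fin (m + 1)) (1 : ℝ) - σ.1‖ < r}) ⊆
      {x : EuclideanSpace ℝ (Fin (m + 1)) |
        x 0 ∈ Set.Ioo (-1) 1 ∧ ∀ i : Fin m, x i.succ ∈ Set.Ioo (-r) r} := by
    rintro _ ⟨t, ⟨ht0, ht1⟩, _, ⟨σ, hσ, rfl⟩, rfl⟩
    have hn : ‖σ.1‖ = 1 := by simp
    have hle := fun i => PiLp.norm_apply_le σ.1 i
    have hle' := fun i => PiLp.norm_apply_le (EuclideanSpace.single (0 : Fin (m + 1)) (1 : ℝ) - σ.1) i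
    simp only [Set.mem_ofPred_eq, ← abs_lt, Set.mem_Ioo] at hσ ⊢
    simp only [PiLp.smul_apply, smul_eq_mul, abs_mul, abs_of_pos ht0]
    refine ⟨?_, fun i => ?_⟩
    · have := hle 0
      rw [hn, Real.norm_eq_abs] at this
      nlinarith [abs_nonneg (σ.1 0)]
    · have := (hle' i.succ).trans_lt hσ
      simp at this
      nlinarith [abs_nonneg (σ.1 i.succ)]
  refine (mul_le_mul_right (measure_mono hsub) _).trans ?_
  rw [EuclideanSpace.volume_box, finrank_euclideanSpace_fin, ← ENNReal.ofReal_pow (by positivity),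
    ← ENNReal.ofReal_mul (by norm_num), ← ENNReal.ofReal_natCast, ← ENNReal.ofReal_mul (by positivity)]
  apply ENNReal.ofReal_le_ofReal
  rw [mul_pow]
  push_cast
  apply le_of_eq
  ring

open scoped Pointwise in
theorem exists_le_toSphere_cap (m : ℕ) :
    ∃ a : ℝ, 0 < a ∧ ∀ r : ℝ, 0 < r → r ≤ 2 →
      ENNReal.ofReal (a * r ^ m) ≤
      (volume : Measure (EuclideanSpace ℝ (Fin (m + 1)))).toSphere
        {σ | ‖EuclideanSpace.single (0 : Fin (m + 1)) (1 : ℝ) - σ.1‖ < r} := by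
  refine ⟨(m + 1) * (1 / 4 * (2 * (1 / (8 * (m + 1)))) ^ m), by positivity, fun r hr hr2 => ?_⟩
  rw [Measure.toSphere_apply' _ (measurableSet_lt (by fun_prop) (by fun_prop))]
  have hsub : {x : EuclideanSpace ℝ (Fin (m + 1)) |
        x 0 ∈ Set.Ioo (1 / 4) (1 / 2) ∧
          ∀ i : Fin m, x i.succ ∈ Set.Ioo (-(r / (8 * (m + 1)))) (r / (8 * (m + 1)))} ⊆
      Set.Ioo (0 : ℝ) 1 • (Subtype.val '' {σ : sphere (0 : EuclideanSpace ℝ (Fin (m + 1))) 1 |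
        ‖EuclideanSpace.single (0 : Fin (m + 1)) (1 : ℝ) - σ.1‖ < r}) := by
    rintro x ⟨⟨h1, h2⟩, h3⟩
    have hx0 : 0 < x 0 := by linarith
    have hy : ‖x - x 0 • EuclideanSpace.single 0 1‖ < r / 8 := by
      refine (EuclideanSpace.norm_sub_single_le_sum x).trans_lt ?_
      calc ∑ i : Fin m, |x i.succ| ≤ ∑ i : Fin m, r / (8 * (m + 1)) :=
            Finset.sum_le_sum fun i _ => (abs_lt.2 (h3 i)).le
        _ = m * (r / (8 * (m + 1))) := by simp
        _ < r / 8 := by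
          rw [← mul_div_assoc, div_lt_div_iff₀ (by positivity) (by norm_num)]
          nlinarith
    have hxne : x ≠ 0 := by
      rintro rfl
      simp at hx0
    have hxpos : 0 < ‖x‖ := norm_pos_iff.2 hxne
    have he : ‖EuclideanSpace.single (0 : Fin (m + 1)) (1 : ℝ)‖ = 1 := by simp
    have hx1 : ‖x‖ < 1 := by
      have : ‖x‖ ≤ ‖x - x 0 • EuclideanSpace.single 0 1‖ +
          ‖x 0 • EuclideanSpace.single (0 : Fin (m + 1)) (1 : ℝ)‖ := by
        conv_lhs => rw [← sub_add_cancel x (x 0 • EuclideanSpace.single (0 : Fin (m + 1)) (1 : ℝ))]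
        exact norm_add_le _ _
      rw [norm_smul, he, mul_one, Real.norm_of_nonneg hx0.le] at this
      linarith
    refine ⟨‖x‖, ⟨hxpos, hx1⟩, ‖x‖⁻¹ • x, ⟨⟨‖x‖⁻¹ • x, ?_⟩, ?_, rfl⟩, ?_⟩
    · simp [norm_smul, hxpos.ne']
    · refine (norm_normalize_sub_le he hxne hx0).trans_lt ?_
      rw [div_lt_iff₀ hx0]
      nlinarith
    · simp [smul_smul, hxpos.ne']
  refine le_trans ?_ (mul_le_mul_right (measure_mono hsub) _)
  rw [EuclideanSpace.volume_box, finrank_euclideanSpace_fin, ← ENNReal.ofReal_pow (by positivity),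
    ← ENNReal.ofReal_mul (by norm_num), ← ENNReal.ofReal_natCast, ← ENNReal.ofReal_mul (by positivity)]
  apply ENNReal.ofReal_le_ofReal
  have : 2 * (r / (8 * ((m : ℝ) + 1))) = (2 * (1 / (8 * (m + 1)))) * r := by ring
  rw [this, mul_pow _ r]
  push_cast
  apply le_of_eq
  ring

theorem lintegral_rpow_neg_eq_layercake {α : Type*} [MeasurableSpace α] {μ : Measure α}
    {q : α → ℝ} (hq : Measurable q) (hpos : ∀ᵐ x ∂μ, 0 < q x) {γ : ℝ} (hγ : 0 < γ) :
    ∫⁻ x, ENNReal.ofReal (q x) ^ (-γ) ∂μ =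
      ENNReal.ofReal γ * ∫⁻ t in Set.Ioi 0, μ {x | t < (q x)⁻¹} * ENNReal.ofReal (t ^ (γ - 1)) := by
  rw [← lintegral_rpow_eq_lintegral_meas_lt_mul μ (f := fun x => (q x)⁻¹)
    (by filter_upwards [hpos] with x hx using (inv_pos.2 hx).le) (by fun_prop) hγ]
  apply lintegral_congr_ae
  filter_upwards [hpos] with x hx
  rw [ENNReal.ofReal_rpow_of_pos hx, Real.rpow_neg_eq_inv_rpow]

theorem setLIntegral_Ioc_zero_one_rpow {γ : ℝ} (hγ : 0 < γ) :
    ∫⁻ t in Set.Ioc (0 : ℝ) 1, ENNReal.ofReal (t ^ (γ - 1)) = ENNReal.ofReal γ⁻¹ := by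
  have hi : IntervalIntegrable (fun t : ℝ => t ^ (γ - 1)) volume 0 1 :=
    intervalIntegral.intervalIntegrable_rpow' (by linarith)
  rw [← ofReal_integral_eq_lintegral_ofReal hi.1, ← intervalIntegral.integral_of_le zero_le_one,
    integral_rpow (Or.inl (by linarith))]
  · simp [hγ.ne']
  · filter_upwards [ae_restrict_mem measurableSet_Ioc] with t ht using Real.rpow_nonneg ht.1.le _

theorem setLIntegral_Ioi_one_rpow {p : ℝ} (hp : p < -1) :
    ∫⁻ t in Set.Ioi (1 : ℝ), ENNReal.ofReal (t ^ p) = ENNReal.ofReal (-(p + 1))⁻¹ := by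
  rw [← ofReal_integral_eq_lintegral_ofReal (integrableOn_Ioi_rpow_of_lt hp one_pos),
    integral_Ioi_rpow_of_lt hp one_pos]
  · simp [neg_div, ← inv_neg]
  · filter_upwards [ae_restrict_mem measurableSet_Ioi] with t ht
      using Real.rpow_nonneg (zero_le_one.trans (le_of_lt ht)) _

theorem setLIntegral_Ioc_one_rpow_neg_one {T : ℝ} (hT : 1 ≤ T) :
    ∫⁻ t in Set.Ioc (1 : ℝ) T, ENNReal.ofReal (t ^ (-1 : ℝ)) = ENNReal.ofReal (Real.log T) := by
  have hT0 : 0 < T := by linarith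
  have h0 : (0 : ℝ) ∉ Set.uIcc 1 T := by
    rw [Set.uIcc_of_le hT]
    exact fun h => by linarith [h.1]
  have hi : IntervalIntegrable (fun t : ℝ => t ^ (-1 : ℝ)) volume 1 T :=
    intervalIntegral.intervalIntegrable_rpow (Or.inr h0)
  rw [← ofReal_integral_eq_lintegral_ofReal hi.1, ← intervalIntegral.integral_of_le hT]
  · simp_rw [Real.rpow_neg_one]
    rw [integral_inv_of_pos one_pos hT0, div_one]
  · filter_upwards [ae_restrict_mem measurableSet_Ioc] with t ht
      using Real.rpow_nonneg (zero_le_one.trans ht.1.le) _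

theorem setLIntegral_Ioc_one_rpow_le {p T : ℝ} (hp : -1 < p) (hT : 1 ≤ T) :
    ∫⁻ t in Set.Ioc (1 : ℝ) T, ENNReal.ofReal (t ^ p) ≤
      ENNReal.ofReal (T ^ (p + 1) / (p + 1)) := by
  have hi : IntervalIntegrable (fun t : ℝ => t ^ p) volume 1 T :=
    intervalIntegral.intervalIntegrable_rpow' hp
  rw [← ofReal_integral_eq_lintegral_ofReal hi.1, ← intervalIntegral.integral_of_le hT,
    integral_rpow (Or.inl hp)]
  · apply ENNReal.ofReal_le_ofReal
    have : 0 < p + 1 := by linarith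
    gcongr
    simp
  · filter_upwards [ae_restrict_mem measurableSet_Ioc] with t ht
      using Real.rpow_nonneg (zero_le_one.trans ht.1.le) _

theorem lintegral_rpow_neg_le_of_meas_lt_le {α : Type*} [MeasurableSpace α] {μ : Measure α}
    {q : α → ℝ} (hq : Measurable q) (hpos : ∀ᵐ x ∂μ, 0 < q x) {γ M A : ℝ} (hγ : 0 < γ)
    (hA : 0 ≤ A) {m : ℕ} (hM : μ Set.univ ≤ ENNReal.ofReal M)
    (hcap : ∀ u : ℝ, 0 < u → μ {x | q x < u} ≤ ENNReal.ofReal (A * u ^ m))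
    {S : Set ℝ} (hS : MeasurableSet S)
    (hSc : ∀ t ∈ Set.Ioi 1 \ S, ∀ x, (q x)⁻¹ ≤ t) :
    ∫⁻ x, ENNReal.ofReal (q x) ^ (-γ) ∂μ ≤
      ENNReal.ofReal M +
        ENNReal.ofReal (γ * A) * ∫⁻ t in S, ENNReal.ofReal (t ^ (γ - 1 - m)) := by
  rw [lintegral_rpow_neg_eq_layercake hq hpos hγ, ← Set.Ioc_union_Ioi_eq_Ioi zero_le_one]
  refine (mul_le_mul_right (lintegral_union_le _ _ _) _).trans ?_
  rw [mul_add]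
  gcongr ?_ + ?_
  · calc _ ≤ ENNReal.ofReal γ * ∫⁻ t in Set.Ioc (0 : ℝ) 1,
          ENNReal.ofReal M * ENNReal.ofReal (t ^ (γ - 1)) := by
          gcongr
          exact (measure_mono (Set.subset_univ _)).trans hM
      _ = ENNReal.ofReal M := by
        rw [lintegral_const_mul _ (by fun_prop), setLIntegral_Ioc_zero_one_rpow hγ, mul_left_comm,
          ← ENNReal.ofReal_mul hγ.le, mul_inv_cancel₀ hγ.ne']
        simp
  · rw [ENNReal.ofReal_mul hγ.le, mul_assoc,
      ← lintegral_const_mul (ENNReal.ofReal A) (by fun_prop),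
      ← lintegral_indicator hS, ← lintegral_indicator measurableSet_Ioi]
    refine mul_le_mul_right (lintegral_mono fun t => ?_) _
    by_cases ht : t ∈ Set.Ioi 1
    swap
    · simp [Set.indicator_of_notMem ht]
    rw [Set.indicator_of_mem ht]
    by_cases hts : t ∈ S
    · rw [Set.indicator_of_mem hts]
      have ht0 : 0 < t := zero_lt_one.trans ht
      calc _ ≤ ENNReal.ofReal (A * t⁻¹ ^ m) * ENNReal.ofReal (t ^ (γ - 1)) := by
            gcongr
            refine (measure_mono fun x hx => ?_).trans (hcap _ (inv_pos.2 ht0))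
            have hx : t < (q x)⁻¹ := hx
            have h1 : 0 < q x := inv_pos.1 (ht0.trans hx)
            exact (lt_inv_comm₀ ht0 h1).1 hx
        _ = _ := by
          rw [← ENNReal.ofReal_mul (by positivity), ← ENNReal.ofReal_mul hA,
            Real.rpow_sub_natCast ht0.ne' _ m, inv_pow]
          congr 1
          ring
    · have : {x | t < (q x)⁻¹} = ∅ := by
        ext x
        simpa using hSc t ⟨ht, hts⟩ x
      simp [this]

theorem le_lintegral_rpow_neg_of_le_meas_lt {α : Type*} [MeasurableSpace α] {μ : Measure α}
    {q : α → ℝ} (hq : Measurable q) (hpos : ∀ x, 0 < q x) {γ a : ℝ} (hγ : 0 < γ)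
    (ha : 0 ≤ a) {m : ℕ} {S : Set ℝ} (hS : MeasurableSet S) (hS0 : S ⊆ Set.Ioi 0)
    (hcap : ∀ t ∈ S, ENNReal.ofReal (a * t⁻¹ ^ m) ≤ μ {x | q x < t⁻¹}) :
    ENNReal.ofReal (γ * a) * ∫⁻ t in S, ENNReal.ofReal (t ^ (γ - 1 - m)) ≤
      ∫⁻ x, ENNReal.ofReal (q x) ^ (-γ) ∂μ := by
  rw [lintegral_rpow_neg_eq_layercake hq (.of_forall hpos) hγ, ENNReal.ofReal_mul hγ.le, mul_assoc,
    ← lintegral_const_mul (ENNReal.ofReal a) (by fun_prop)]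
  refine mul_le_mul_right
    ((setLIntegral_mono' hS fun t ht => ?_).trans (lintegral_mono_set hS0)) _
  have ht0 : 0 < t := hS0 ht
  calc _ = ENNReal.ofReal (a * t⁻¹ ^ m) * ENNReal.ofReal (t ^ (γ - 1)) := by
          rw [← ENNReal.ofReal_mul ha, ← ENNReal.ofReal_mul (by positivity),
            Real.rpow_sub_natCast ht0.ne' _ m, inv_pow]
          congr 1
          ring
    _ ≤ _ := by
      gcongr
      refine (hcap t ht).trans (measure_mono fun x hx => ?_)
      exact (lt_inv_comm₀ (hpos x) ht0).1 hx

/-- The surface measure on the unit sphere of `ℝ^(m+1)`. -/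
noncomputable abbrev unitSphereMeasure (m : ℕ) :
    Measure (sphere (0 : EuclideanSpace ℝ (Fin (m + 1))) 1) :=
  (volume : Measure (EuclideanSpace ℝ (Fin (m + 1)))).toSphere

/-- The distance `|s e₁ - σ|` from a point of the unit sphere to a point of the first axis. -/
noncomputable def axisDist (m : ℕ) (s : ℝ) (σ : sphere (0 : EuclideanSpace ℝ (Fin (m + 1))) 1) :
    ℝ :=
  ‖s • EuclideanSpace.single (0 : Fin (m + 1)) (1 : ℝ) - σ.1‖

namespace axisDist

variable {m : ℕ} {s : ℝ} {σ : sphere (0 : EuclideanSpace ℝ (Fin (m + 1))) 1}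

theorem continuous (m : ℕ) (s : ℝ) : Continuous (axisDist m s) := by
  unfold axisDist
  fun_prop

theorem nonneg : 0 ≤ axisDist m s σ := norm_nonneg _

theorem sq_eq : axisDist m s σ ^ 2 = (1 - s) ^ 2 + s * axisDist m 1 σ ^ 2 := by
  simpa [axisDist] using sq_dist_smul_sphere
    (e := EuclideanSpace.single (0 : Fin (m + 1)) (1 : ℝ)) (by simp) (norm_eq_of_mem_sphere σ) s

theorem abs_one_sub_le (hs : 0 ≤ s) : |1 - s| ≤ axisDist m s σ := by
  refine abs_le_of_sq_le_sq (le_of_le_of_eq ?_ sq_eq.symm) nonneg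
  nlinarith [mul_nonneg hs (sq_nonneg (axisDist m 1 σ))]

theorem le_one_add (hs : 0 ≤ s) : axisDist m s σ ≤ 1 + s := by
  refine (norm_sub_le _ _).trans (le_of_eq ?_)
  rw [norm_smul, norm_eq_of_mem_sphere σ, Real.norm_of_nonneg hs]
  simp [add_comm]

theorem half_le (hs : 0 ≤ s) (h : 1 ≤ axisDist m 1 σ) : (1 + s) / 2 ≤ axisDist m s σ := by
  refine le_of_sq_le_sq ?_ nonneg
  rw [sq_eq]
  nlinarith [mul_le_mul_of_nonneg_left (one_le_pow₀ h (n := 2)) hs, sq_nonneg (1 - s)]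

theorem one_lt_two_mul (hs : 1 / 2 ≤ s) {u : ℝ} (hu : axisDist m s σ < u) :
    axisDist m 1 σ < 2 * u := by
  have h0 := nonneg.trans_lt hu
  refine lt_of_pow_lt_pow_left₀ 2 (by positivity) ?_
  have h1 := sq_eq (m := m) (s := s) (σ := σ)
  have h2 : axisDist m s σ ^ 2 < u ^ 2 := pow_lt_pow_left₀ hu nonneg two_ne_zero
  nlinarith [sq_nonneg (1 - s), sq_nonneg (axisDist m 1 σ)]

theorem lt_of_one_lt_half (hs2 : s ≤ 2) {u : ℝ} (hu : 2 * |1 - s| ≤ u)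
    (h : axisDist m 1 σ < u / 2) : axisDist m s σ < u := by
  have h0 := nonneg.trans_lt h
  refine lt_of_pow_lt_pow_left₀ 2 (by linarith) ?_
  have h1 := sq_eq (m := m) (s := s) (σ := σ)
  have h2 : axisDist m 1 σ ^ 2 < (u / 2) ^ 2 := pow_lt_pow_left₀ h nonneg two_ne_zero
  have h3 : |1 - s| ^ 2 ≤ (u / 2) ^ 2 := pow_le_pow_left₀ (abs_nonneg _) (by linarith) _
  rw [sq_abs] at h3
  nlinarith [sq_nonneg (axisDist m 1 σ)]

theorem exists_meas_lt_le (m : ℕ) :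
    ∃ A : ℝ, 0 < A ∧ ∀ s : ℝ, 1 / 2 ≤ s → ∀ u : ℝ, 0 < u →
      unitSphereMeasure m {σ | axisDist m s σ < u} ≤ ENNReal.ofReal (A * u ^ m) := by
  obtain ⟨A, hA, h⟩ := exists_toSphere_cap_le m
  refine ⟨A * 2 ^ m, by positivity, fun s hs u hu => ?_⟩
  rw [mul_assoc, ← mul_pow]
  refine (measure_mono fun σ hσ => ?_).trans (h (2 * u) (by positivity))
  simpa [axisDist] using one_lt_two_mul hs hσ

theorem exists_le_meas_lt (m : ℕ) :
    ∃ a : ℝ, 0 < a ∧ ∀ s : ℝ, s ≤ 2 → ∀ u : ℝ, 0 < u → 2 * |1 - s| ≤ u → u ≤ 4 →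
      ENNReal.ofReal (a * u ^ m) ≤ unitSphereMeasure m {σ | axisDist m s σ < u} := by
  obtain ⟨a, ha, h⟩ := exists_le_toSphere_cap m
  refine ⟨a * (1 / 2) ^ m, by positivity, fun s hs2 u hu hsu hu4 => ?_⟩
  have : a * (1 / 2) ^ m * u ^ m = a * (u / 2) ^ m := by
    rw [mul_assoc, ← mul_pow]
    ring
  rw [this]
  refine (h (u / 2) (by positivity) (by linarith)).trans (measure_mono fun σ hσ => ?_)
  exact lt_of_one_lt_half hs2 hsu (by simpa [axisDist] using hσ)

end axisDist

theorem sphereIntegralF_eq_lintegral_axisDist (m : ℕ) (hn : 0 < m + 1) (β s : ℝ) :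
    sphereIntegralF (m + 1) hn β s =
      ∫⁻ σ, ENNReal.ofReal (axisDist m s σ) ^ (β - (m + 1 : ℕ)) ∂unitSphereMeasure m := by
  simp_rw [axisDist, ofReal_norm]
  rfl

theorem exists_le_sphereIntegralF (m : ℕ) (hn : 0 < m + 1) (β : ℝ) :
    ∃ c : ℝ, 0 < c ∧ ∀ s : ℝ, 0 < s →
      ENNReal.ofReal (c * (1 + s) ^ (β - (m + 1 : ℕ))) ≤ sphereIntegralF (m + 1) hn β s := by
  have hUo : IsOpen {σ | 1 < axisDist m 1 σ} :=
    isOpen_lt continuous_const (axisDist.continuous m 1)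
  have hUne : {σ | 1 < axisDist m 1 σ}.Nonempty := by
    refine ⟨⟨-EuclideanSpace.single (0 : Fin (m + 1)) (1 : ℝ), by simp⟩, ?_⟩
    simp only [axisDist, Set.mem_ofPred_eq, one_smul, sub_neg_eq_add, ← two_smul ℝ, norm_smul]
    simp
  set U := {σ | 1 < axisDist m 1 σ} with hU
  have hμ : 0 < (unitSphereMeasure m).real U :=
    ENNReal.toReal_pos (hUo.measure_ne_zero _ hUne) (measure_ne_top _ _)
  set p := β - (m + 1 : ℕ) with hp
  have key : ∃ k : ℝ, 0 < k ∧ ∀ s : ℝ, 0 < s → ∀ σ ∈ U,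
      ENNReal.ofReal (k * (1 + s) ^ p) ≤ ENNReal.ofReal (axisDist m s σ) ^ p := by
    refine ⟨min 1 ((1 / 2) ^ p), by positivity, fun s hs σ hσ => ?_⟩
    have h1 := axisDist.half_le hs.le (le_of_lt hσ)
    have h2 := axisDist.le_one_add (σ := σ) hs.le
    have h0 : 0 < axisDist m s σ := lt_of_lt_of_le (by positivity) h1
    rw [ENNReal.ofReal_rpow_of_pos h0]
    apply ENNReal.ofReal_le_ofReal
    rcases le_or_gt 0 p with h | h
    · calc _ ≤ (1 / 2) ^ p * (1 + s) ^ p := by gcongr; exact min_le_right _ _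
        _ = ((1 + s) / 2) ^ p := by
          rw [← Real.mul_rpow (by norm_num) (by positivity)]
          ring_nf
        _ ≤ _ := Real.rpow_le_rpow (by positivity) h1 h
    · calc _ ≤ 1 * (1 + s) ^ p := by gcongr; exact min_le_left _ _
        _ ≤ _ := by
          rw [one_mul]
          exact Real.rpow_le_rpow_of_nonpos h0 h2 h.le
  obtain ⟨k, hk, hk'⟩ := key
  refine ⟨k * (unitSphereMeasure m).real U, by positivity, fun s hs => ?_⟩
  rw [sphereIntegralF_eq_lintegral_axisDist]
  calc _ = ENNReal.ofReal (k * (1 + s) ^ p) * unitSphereMeasure m U := by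
        rw [mul_right_comm, ENNReal.ofReal_mul (by positivity), ofReal_measureReal]
    _ = ∫⁻ σ in U, ENNReal.ofReal (k * (1 + s) ^ p) ∂unitSphereMeasure m := by simp
    _ ≤ ∫⁻ σ in U, ENNReal.ofReal (axisDist m s σ) ^ p ∂unitSphereMeasure m :=
      setLIntegral_mono' hUo.measurableSet (hk' s hs)
    _ ≤ _ := setLIntegral_le_lintegral _ _

theorem exists_sphereIntegralF_le_of_far (m : ℕ) (hn : 0 < m + 1) (β : ℝ) :
    ∃ C : ℝ, 0 < C ∧ ∀ s : ℝ, 0 < s → (1 + s ≤ 3 * |1 - s| ∨ 0 ≤ β - (m + 1 : ℕ)) →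
      sphereIntegralF (m + 1) hn β s ≤ ENNReal.ofReal (C * (1 + s) ^ (β - (m + 1 : ℕ))) := by
  set p := β - (m + 1 : ℕ) with hp
  have hμ : 0 < (unitSphereMeasure m).real Set.univ :=
    ENNReal.toReal_pos (isOpen_univ.measure_ne_zero _
      ⟨⟨EuclideanSpace.single (0 : Fin (m + 1)) (1 : ℝ), by simp⟩, trivial⟩) (measure_ne_top _ _)
  refine ⟨max 1 ((1 / 3) ^ p) * (unitSphereMeasure m).real Set.univ, by positivity,
    fun s hs hfar => ?_⟩
  have key : ∀ σ, ENNReal.ofReal (axisDist m s σ) ^ p ≤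
      ENNReal.ofReal (max 1 ((1 / 3) ^ p) * (1 + s) ^ p) := by
    intro σ
    have h2 := axisDist.le_one_add (σ := σ) hs.le
    rcases le_or_gt 0 p with h | h
    · rw [ENNReal.ofReal_rpow_of_nonneg axisDist.nonneg h]
      apply ENNReal.ofReal_le_ofReal
      calc _ ≤ 1 * (1 + s) ^ p := by
            rw [one_mul]
            exact Real.rpow_le_rpow axisDist.nonneg h2 h
        _ ≤ _ := by gcongr; exact le_max_left _ _
    · have hf := hfar.resolve_right (not_le.2 h)
      have h1 : (1 + s) / 3 ≤ axisDist m s σ := by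
        have := axisDist.abs_one_sub_le (σ := σ) hs.le
        linarith
      have h0 : 0 < axisDist m s σ := lt_of_lt_of_le (by positivity) h1
      rw [ENNReal.ofReal_rpow_of_pos h0]
      apply ENNReal.ofReal_le_ofReal
      calc _ ≤ ((1 + s) / 3) ^ p := Real.rpow_le_rpow_of_nonpos (by positivity) h1 h.le
        _ = (1 / 3) ^ p * (1 + s) ^ p := by
          rw [← Real.mul_rpow (by norm_num) (by positivity)]
          ring_nf
        _ ≤ _ := by gcongr; exact le_max_right _ _
  rw [sphereIntegralF_eq_lintegral_axisDist]
  calc _ ≤ ∫⁻ σ, ENNReal.ofReal (max 1 ((1 / 3) ^ p) * (1 + s) ^ p) ∂unitSphereMeasure m :=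
        lintegral_mono key
    _ = _ := by
      rw [lintegral_const, mul_right_comm, ENNReal.ofReal_mul (p := _ * (1 + s) ^ p) (by positivity),
        ofReal_measureReal]

theorem exists_sphereIntegralF_le_add_of_near (m : ℕ) (hn : 0 < m + 1) {β : ℝ}
    (hβ : β < (m + 1 : ℕ)) :
    ∃ M A : ℝ, 0 < M ∧ 0 < A ∧ ∀ s : ℝ, 1 / 2 ≤ s →
      (∀ᵐ σ ∂unitSphereMeasure m, 0 < axisDist m s σ) →
      ∀ S : Set ℝ, MeasurableSet S → (∀ t ∈ Set.Ioi 1 \ S, ∀ σ, (axisDist m s σ)⁻¹ ≤ t) →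
      sphereIntegralF (m + 1) hn β s ≤
        ENNReal.ofReal M + ENNReal.ofReal A * ∫⁻ t in S, ENNReal.ofReal (t ^ (-β)) := by
  obtain ⟨A, hA, h⟩ := axisDist.exists_meas_lt_le m
  have hγ : 0 < (m + 1 : ℕ) - β := by linarith
  refine ⟨(unitSphereMeasure m).real Set.univ + 1, ((m + 1 : ℕ) - β) * A, by positivity,
    by positivity, fun s hs hpos S hS hSc => ?_⟩
  have := lintegral_rpow_neg_le_of_meas_lt_le (axisDist.continuous m s).measurable hpos hγ hA.le
    (M := (unitSphereMeasure m).real Set.univ + 1) ?_ (h s hs) hS hSc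
  · rw [sphereIntegralF_eq_lintegral_axisDist]
    convert this using 7
    · ring
    · push_cast
      ring
  · rw [ENNReal.le_ofReal_iff_toReal_le (measure_ne_top _ _) (by positivity)]
    exact (lt_add_one _).le

theorem exists_sphereIntegralF_le_of_one_lt (m : ℕ) (hn : 0 < m + 1) {β : ℝ} (h1 : 1 < β)
    (hβ : β < (m + 1 : ℕ)) :
    ∃ C : ℝ, 0 < C ∧ ∀ s : ℝ, 1 / 2 ≤ s → sphereIntegralF (m + 1) hn β s ≤ ENNReal.ofReal C := by
  obtain ⟨M, A, hM, hA, h⟩ := exists_sphereIntegralF_le_add_of_near m hn hβ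
  have hβ1 : 0 < β - 1 := by linarith
  have hm : m ≠ 0 := by
    rintro rfl
    norm_num at hβ
    linarith
  refine ⟨M + A * (β - 1)⁻¹, by positivity, fun s hs => ?_⟩
  refine (h s hs ?_ (Set.Ioi 1) measurableSet_Ioi (by simp)).trans (le_of_eq ?_)
  · obtain ⟨B, hB, hB'⟩ := axisDist.exists_meas_lt_le m
    have hz : unitSphereMeasure m {σ | axisDist m s σ ≤ 0} = 0 := by
      have ht : Filter.Tendsto (fun u : ℝ => ENNReal.ofReal (B * u ^ m))
          (nhdsWithin 0 (Set.Ioi 0)) (nhds 0) := by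
        have hc : Continuous fun u : ℝ => ENNReal.ofReal (B * u ^ m) :=
          ENNReal.continuous_ofReal.comp (by fun_prop)
        have := (hc.tendsto 0).mono_left (nhdsWithin_le_nhds (s := Set.Ioi 0))
        simpa [hm] using this
      refine le_antisymm (ge_of_tendsto ht ?_) zero_le
      filter_upwards [self_mem_nhdsWithin] with u hu
      refine (measure_mono fun σ hσ => ?_).trans (hB' s hs u hu)
      exact lt_of_le_of_lt (Set.mem_ofPred_eq ▸ hσ) hu
    rw [ae_iff]
    simpa using hz
  · rw [setLIntegral_Ioi_one_rpow (by linarith), ENNReal.ofReal_add hM.le (by positivity),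
      ENNReal.ofReal_mul hA.le]
    congr 4
    ring

theorem axisDist.inv_le_of_notMem_Ioc {m : ℕ} {s : ℝ} (hs : 0 ≤ s) (hs1 : s ≠ 1) :
    ∀ t ∈ Set.Ioi 1 \ Set.Ioc 1 |1 - s|⁻¹, ∀ σ, (axisDist m s σ)⁻¹ ≤ t := by
  rintro t ⟨ht, hts⟩ σ
  have hlt : |1 - s|⁻¹ < t := not_le.1 fun h => hts ⟨ht, h⟩
  have hD : 0 < |1 - s| := abs_pos.2 (sub_ne_zero.2 hs1.symm)
  exact (inv_anti₀ hD (axisDist.abs_one_sub_le hs)).trans hlt.le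

theorem axisDist.pos {m : ℕ} {s : ℝ} (hs : 0 ≤ s) (hs1 : s ≠ 1)
    (σ : sphere (0 : EuclideanSpace ℝ (Fin (m + 1))) 1) : 0 < axisDist m s σ :=
  (abs_pos.2 (sub_ne_zero.2 hs1.symm)).trans_le (axisDist.abs_one_sub_le hs)

theorem exists_sphereIntegralF_le_of_lt_one (m : ℕ) (hn : 0 < m + 1) {β : ℝ} (h1 : β < 1) :
    ∃ C : ℝ, 0 < C ∧ ∀ s : ℝ, 1 / 2 ≤ s → s ≠ 1 → |1 - s| ≤ 1 →
      sphereIntegralF (m + 1) hn β s ≤ ENNReal.ofReal (C * |1 - s| ^ (β - 1)) := by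
  obtain ⟨M, A, hM, hA, h⟩ := exists_sphereIntegralF_le_add_of_near m hn (β := β)
    (h1.trans_le (by simp))
  have hβ1 : 0 < 1 - β := by linarith
  refine ⟨M + A * (1 - β)⁻¹, by positivity, fun s hs hs1 hD1 => ?_⟩
  have hs0 : 0 ≤ s := by linarith
  have hD : 0 < |1 - s| := abs_pos.2 (sub_ne_zero.2 hs1.symm)
  refine (h s hs (.of_forall (axisDist.pos hs0 hs1)) _ measurableSet_Ioc
    (axisDist.inv_le_of_notMem_Ioc hs0 hs1)).trans ?_
  calc _ ≤ ENNReal.ofReal M + ENNReal.ofReal A *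
        ENNReal.ofReal (|1 - s|⁻¹ ^ (-β + 1) / (-β + 1)) := by
        gcongr
        exact setLIntegral_Ioc_one_rpow_le (by linarith) ((one_le_inv₀ hD).2 hD1)
    _ = ENNReal.ofReal (M + A * (1 - β)⁻¹ * |1 - s| ^ (β - 1)) := by
        rw [← ENNReal.ofReal_mul hA.le, ← ENNReal.ofReal_add hM.le, ← Real.rpow_neg_eq_inv_rpow]
        · congr 2
          rw [show -(-β + 1) = β - 1 by ring, show -β + 1 = 1 - β by ring]
          ring
        · have : 0 < -β + 1 := by linarith
          positivity
    _ ≤ _ := by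
        apply ENNReal.ofReal_le_ofReal
        have : 1 ≤ |1 - s| ^ (β - 1) := Real.one_le_rpow_of_pos_of_le_one_of_nonpos hD hD1
          (by linarith)
        nlinarith

theorem exists_sphereIntegralF_one_le (m : ℕ) (hn : 0 < m + 1) (hm : m ≠ 0) :
    ∃ C : ℝ, 0 < C ∧ ∀ s : ℝ, 1 / 2 ≤ s → s ≠ 1 → |1 - s| ≤ 1 →
      sphereIntegralF (m + 1) hn 1 s ≤ ENNReal.ofReal (C * (1 + Real.log (1 / |1 - s|))) := by
  obtain ⟨M, A, hM, hA, h⟩ := exists_sphereIntegralF_le_add_of_near m hn (β := 1)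
    (by norm_cast; omega)
  refine ⟨M + A, by positivity, fun s hs hs1 hD1 => ?_⟩
  have hs0 : 0 ≤ s := by linarith
  have hD : 0 < |1 - s| := abs_pos.2 (sub_ne_zero.2 hs1.symm)
  have hT : 1 ≤ |1 - s|⁻¹ := (one_le_inv₀ hD).2 hD1
  have hlog := Real.log_nonneg hT
  refine (h s hs (.of_forall (axisDist.pos hs0 hs1)) _ measurableSet_Ioc
    (axisDist.inv_le_of_notMem_Ioc hs0 hs1)).trans ?_
  rw [setLIntegral_Ioc_one_rpow_neg_one hT, ← ENNReal.ofReal_mul hA.le,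
    ← ENNReal.ofReal_add hM.le (by positivity), one_div]
  apply ENNReal.ofReal_le_ofReal
  nlinarith

theorem exists_le_sphereIntegralF_one (m : ℕ) (hn : 0 < m + 1) (hm : m ≠ 0) :
    ∃ c : ℝ, 0 < c ∧ ∀ s : ℝ, 0 ≤ s → s ≠ 1 → |1 - s| ≤ 1 / 2 →
      ENNReal.ofReal (c * Real.log (1 / (2 * |1 - s|))) ≤ sphereIntegralF (m + 1) hn 1 s := by
  obtain ⟨a, ha, h⟩ := axisDist.exists_le_meas_lt m
  have hm0 : (0 : ℝ) < m := by positivity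
  refine ⟨m * a, by positivity, fun s hs hs1 hD1 => ?_⟩
  have hD : 0 < |1 - s| := abs_pos.2 (sub_ne_zero.2 hs1.symm)
  have hT : 1 ≤ (2 * |1 - s|)⁻¹ := (one_le_inv₀ (by positivity)).2 (by linarith)
  have := le_lintegral_rpow_neg_of_le_meas_lt (axisDist.continuous m s).measurable
    (μ := unitSphereMeasure m) (axisDist.pos hs hs1) hm0 ha.le (m := m)
    (S := Set.Ioc 1 (2 * |1 - s|)⁻¹) measurableSet_Ioc (fun t ht => zero_lt_one.trans ht.1)
    fun t ht => h s (by linarith [(abs_le.1 hD1).1]) t⁻¹ (inv_pos.2 (zero_lt_one.trans ht.1))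
      ((le_inv_comm₀ (zero_lt_one.trans ht.1) (by positivity)).1 ht.2)
      ((inv_le_one_of_one_le₀ ht.1.le).trans (by norm_num))
  rw [show (m : ℝ) - 1 - m = -1 by ring, setLIntegral_Ioc_one_rpow_neg_one hT,
    ← ENNReal.ofReal_mul (by positivity)] at this
  rw [sphereIntegralF_eq_lintegral_axisDist, one_div]
  refine this.trans (le_of_eq ?_)
  congr! 3
  push_cast
  ring

theorem exists_le_sphereIntegralF_of_lt_one (m : ℕ) (hn : 0 < m + 1) {β : ℝ} (h1 : β < 1) :
    ∃ c : ℝ, 0 < c ∧ ∀ s : ℝ, 0 ≤ s → s ≠ 1 → |1 - s| ≤ 1 →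
      ENNReal.ofReal (c * |1 - s| ^ (β - 1)) ≤ sphereIntegralF (m + 1) hn β s := by
  obtain ⟨a, ha, h⟩ := axisDist.exists_le_meas_lt m
  have hp : β - (m + 1 : ℕ) < 0 := by
    push_cast
    linarith [(Nat.cast_nonneg m : (0 : ℝ) ≤ m)]
  refine ⟨2 ^ (β - 1) * a, by positivity, fun s hs hs1 hD1 => ?_⟩
  have hD : 0 < |1 - s| := abs_pos.2 (sub_ne_zero.2 hs1.symm)
  rw [sphereIntegralF_eq_lintegral_axisDist]
  have hU : MeasurableSet {σ | axisDist m s σ < 2 * |1 - s|} :=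
    measurableSet_lt (axisDist.continuous m s).measurable measurable_const
  calc _ = ENNReal.ofReal ((2 * |1 - s|) ^ (β - (m + 1 : ℕ))) *
          ENNReal.ofReal (a * (2 * |1 - s|) ^ m) := by
        rw [← ENNReal.ofReal_mul (by positivity), mul_left_comm, ← Real.rpow_add_natCast
          (by positivity), show β - (m + 1 : ℕ) + m = β - 1 by push_cast; ring,
          Real.mul_rpow (by norm_num) hD.le]
        congr 1
        ring
    _ ≤ ENNReal.ofReal ((2 * |1 - s|) ^ (β - (m + 1 : ℕ))) *
          unitSphereMeasure m {σ | axisDist m s σ < 2 * |1 - s|} := by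
        gcongr
        exact h s (by linarith [(abs_le.1 hD1).1]) _ (by positivity) le_rfl (by linarith)
    _ = ∫⁻ σ in {σ | axisDist m s σ < 2 * |1 - s|},
          ENNReal.ofReal ((2 * |1 - s|) ^ (β - (m + 1 : ℕ))) ∂unitSphereMeasure m := by simp
    _ ≤ ∫⁻ σ in {σ | axisDist m s σ < 2 * |1 - s|},
          ENNReal.ofReal (axisDist m s σ) ^ (β - (m + 1 : ℕ)) ∂unitSphereMeasure m := by
        refine setLIntegral_mono' hU fun σ hσ => ?_
        have h0 := axisDist.pos hs hs1 σ
        rw [ENNReal.ofReal_rpow_of_pos h0]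
        exact ENNReal.ofReal_le_ofReal (Real.rpow_le_rpow_of_nonpos h0 (le_of_lt hσ) hp.le)
    _ ≤ _ := setLIntegral_le_lintegral _ _

theorem near_one_of_three_mul_abs_lt {s : ℝ} (h : ¬1 + s ≤ 3 * |1 - s|) :
    1 / 2 ≤ s ∧ |1 - s| ≤ 1 := by
  have h1 := le_abs_self (1 - s)
  have h2 := neg_abs_le (1 - s)
  refine ⟨by linarith, abs_le.2 ⟨?_, ?_⟩⟩ <;> linarith

theorem one_le_three_rpow_mul_rpow_one_add {s : ℝ} {n : ℕ} (hn : 0 < n) (hs : 0 < s) (hs2 : s ≤ 2) :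
    1 ≤ 3 ^ ((n : ℝ) - 1) * (1 + s) ^ ((1 : ℝ) - n) := by
  have hn1 : (1 : ℝ) ≤ n := by exact_mod_cast hn
  have h := Real.rpow_le_rpow_of_nonpos (z := 1 - n) (by positivity : 0 < 1 + s)
    (by linarith : 1 + s ≤ 3) (by linarith)
  calc (1 : ℝ) = 3 ^ ((n : ℝ) - 1) * 3 ^ ((1 : ℝ) - n) := by
        rw [← Real.rpow_add (by norm_num)]
        simp
    _ ≤ _ := by gcongr

theorem sphereIntegralF_bounds_of_lt_one (m : ℕ) (hn : 0 < m + 1) {β : ℝ} (hβ : β < 1) :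
    ∃ c C : ℝ, 0 < c ∧ 0 < C ∧ ∀ s : ℝ, 0 < s → s ≠ 1 →
      ENNReal.ofReal (c * (1 + s) ^ ((1 : ℝ) - (m + 1 : ℕ)) * |1 - s| ^ (β - 1))
        ≤ sphereIntegralF (m + 1) hn β s ∧
      sphereIntegralF (m + 1) hn β s
        ≤ ENNReal.ofReal (C * (1 + s) ^ ((1 : ℝ) - (m + 1 : ℕ)) * |1 - s| ^ (β - 1)) := by
  obtain ⟨c₁, hc₁, hlow⟩ := exists_le_sphereIntegralF m hn β
  obtain ⟨c₂, hc₂, hlow'⟩ := exists_le_sphereIntegralF_of_lt_one m hn hβ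
  obtain ⟨C₁, hC₁, hup⟩ := exists_sphereIntegralF_le_of_far m hn β
  obtain ⟨C₂, hC₂, hup'⟩ := exists_sphereIntegralF_le_of_lt_one m hn hβ
  have hn1 : (1 : ℝ) ≤ (m + 1 : ℕ) := by exact_mod_cast hn
  set n := m + 1
  refine ⟨min (c₁ * 3 ^ (β - 1)) c₂, max C₁ (C₂ * 3 ^ ((n : ℝ) - 1)), by positivity, by positivity,
    fun s hs hs1 => ?_⟩
  have hD : 0 < |1 - s| := abs_pos.2 (sub_ne_zero.2 hs1.symm)
  by_cases hf : 1 + s ≤ 3 * |1 - s|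
  · have hsplit : (1 + s) ^ (β - n) = (1 + s) ^ ((1 : ℝ) - n) * (1 + s) ^ (β - 1) := by
      rw [← Real.rpow_add (by positivity)]
      ring_nf
    refine ⟨le_trans (ENNReal.ofReal_le_ofReal ?_) (hlow s hs),
      (hup s hs (Or.inl hf)).trans (ENNReal.ofReal_le_ofReal ?_)⟩
    · calc _ ≤ c₁ * 3 ^ (β - 1) * (1 + s) ^ ((1 : ℝ) - n) * |1 - s| ^ (β - 1) := by
            gcongr
            exact min_le_left _ _
        _ = c₁ * ((1 + s) ^ ((1 : ℝ) - n) * (3 * |1 - s|) ^ (β - 1)) := by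
            rw [Real.mul_rpow (by norm_num) hD.le]
            ring
        _ ≤ c₁ * (1 + s) ^ (β - n) := by
            rw [hsplit]
            gcongr c₁ * (_ * ?_)
            exact Real.rpow_le_rpow_of_nonpos (by positivity) hf (by linarith)
    · calc _ = C₁ * (1 + s) ^ ((1 : ℝ) - n) * (1 + s) ^ (β - 1) := by rw [hsplit, mul_assoc]
        _ ≤ C₁ * (1 + s) ^ ((1 : ℝ) - n) * |1 - s| ^ (β - 1) := by
            gcongr _ * ?_
            refine Real.rpow_le_rpow_of_nonpos hD (abs_le.2 ⟨?_, ?_⟩) (by linarith) <;> linarith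
        _ ≤ _ := by
            gcongr
            exact le_max_left _ _
  · obtain ⟨hs2, hD1⟩ := near_one_of_three_mul_abs_lt hf
    refine ⟨le_trans (ENNReal.ofReal_le_ofReal ?_) (hlow' s hs.le hs1 hD1),
      (hup' s hs2 hs1 hD1).trans (ENNReal.ofReal_le_ofReal ?_)⟩
    · gcongr
      have : (1 + s) ^ ((1 : ℝ) - n) ≤ 1 :=
        Real.rpow_le_one_of_one_le_of_nonpos (by linarith) (by linarith)
      calc _ ≤ c₂ * 1 := by
            gcongr
            exact min_le_right _ _
        _ = c₂ := mul_one _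
    · gcongr
      calc C₂ = C₂ * 1 := (mul_one _).symm
        _ ≤ C₂ * (3 ^ ((n : ℝ) - 1) * (1 + s) ^ ((1 : ℝ) - n)) := by
            gcongr
            exact one_le_three_rpow_mul_rpow_one_add hn hs (by linarith [(abs_le.1 hD1).1])
        _ ≤ _ := by
            rw [← mul_assoc]
            gcongr
            exact le_max_right _ _

theorem sphereIntegralF_bounds_one (m : ℕ) (hn : 0 < m + 1) :
    ∃ c C : ℝ, 0 < c ∧ 0 < C ∧ ∀ s : ℝ, 0 < s → s ≠ 1 →
      ENNReal.ofReal (c * (1 + (((m + 1 : ℕ) : ℝ) - 1) * max 0 (Real.log (1 / |1 - s|))) *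
          (1 + s) ^ ((1 : ℝ) - (m + 1 : ℕ)))
        ≤ sphereIntegralF (m + 1) hn 1 s ∧
      sphereIntegralF (m + 1) hn 1 s
        ≤ ENNReal.ofReal (C * (1 + (((m + 1 : ℕ) : ℝ) - 1) * max 0 (Real.log (1 / |1 - s|))) *
          (1 + s) ^ ((1 : ℝ) - (m + 1 : ℕ))) := by
  obtain ⟨c₁, hc₁, hlow⟩ := exists_le_sphereIntegralF m hn 1
  obtain ⟨C₁, hC₁, hup⟩ := exists_sphereIntegralF_le_of_far m hn 1
  rcases eq_or_ne m 0 with rfl | hm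
  · refine ⟨c₁, C₁, hc₁, hC₁, fun s hs _ => ⟨?_, ?_⟩⟩
    · simpa using hlow s hs
    · simpa using hup s hs
  obtain ⟨c₂, hc₂, hlow'⟩ := exists_le_sphereIntegralF_one m hn hm
  obtain ⟨C₂, hC₂, hup'⟩ := exists_sphereIntegralF_one_le m hn hm
  have hm1 : (1 : ℝ) ≤ ((m + 1 : ℕ) : ℝ) - 1 := by
    push_cast
    simpa using Nat.one_le_iff_ne_zero.2 hm
  set n := m + 1
  set k : ℝ := (n : ℝ) - 1
  refine ⟨min c₁ c₂ / (2 * (k + 1)), max C₁ (C₂ * 3 ^ k), by positivity, by positivity,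
    fun s hs hs1 => ⟨?_, ?_⟩⟩
  · have hD : 0 < |1 - s| := abs_pos.2 (sub_ne_zero.2 hs1.symm)
    have hX0 : 0 < (1 + s) ^ ((1 : ℝ) - n) := by positivity
    have hX1 : (1 + s) ^ ((1 : ℝ) - n) ≤ 1 :=
      Real.rpow_le_one_of_one_le_of_nonpos (by linarith) (by linarith)
    have hlow := hlow s hs
    set X := (1 + s) ^ ((1 : ℝ) - n)
    have hlog2 : Real.log 2 ≤ 1 := by linarith [Real.log_two_lt_d9]
    have hlogmul : Real.log (1 / |1 - s|) = Real.log (1 / (2 * |1 - s|)) + Real.log 2 := by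
      rw [← Real.log_mul (by positivity) (by norm_num)]
      congr 1
      field_simp
    set c := min c₁ c₂ / (2 * (k + 1)) with hc
    have hc0 : 0 < c := by positivity
    have hcc₁ : c * (k + 1) ≤ c₁ / 2 := by
      have : c * (k + 1) = min c₁ c₂ / 2 := by
        rw [hc]
        field_simp
      rw [this]
      gcongr
      exact min_le_left _ _
    have hcc₂ : c * (k + 1) ≤ c₂ / 2 := by
      have : c * (k + 1) = min c₁ c₂ / 2 := by
        rw [hc]
        field_simp
      rw [this]
      gcongr
      exact min_le_right _ _
    by_cases hD2 : |1 - s| ≤ 1 / 2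
    · have hlow' := hlow' s hs.le hs1 hD2
      have hℓ : 0 ≤ Real.log (1 / (2 * |1 - s|)) :=
        Real.log_nonneg ((one_le_div₀ (by positivity)).2 (by linarith))
      set ℓ := Real.log (1 / (2 * |1 - s|))
      have hL : max 0 (Real.log (1 / |1 - s|)) ≤ ℓ + 1 := max_le (by linarith) (by linarith)
      have hmax : c * (1 + k * max 0 (Real.log (1 / |1 - s|))) * X ≤ max (c₁ * X) (c₂ * ℓ) := by
        calc _ ≤ c * (1 + k * (ℓ + 1)) * X := by gcongr
          _ = c * (k + 1) * X + c * k * ℓ * X := by ring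
          _ ≤ c₁ / 2 * X + c * (k + 1) * ℓ * 1 := by
              gcongr
              linarith
          _ ≤ c₁ / 2 * X + c₂ / 2 * ℓ * 1 := by gcongr
          _ ≤ _ := by
              linarith [le_max_left (c₁ * X) (c₂ * ℓ), le_max_right (c₁ * X) (c₂ * ℓ)]
      refine (ENNReal.ofReal_le_ofReal hmax).trans ?_
      rw [ENNReal.ofReal_max]
      exact max_le hlow hlow'
    · have hℓ : Real.log (1 / (2 * |1 - s|)) ≤ 0 :=
        Real.log_nonpos (by positivity) ((div_le_one₀ (by positivity)).2 (by linarith))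
      have hL : max 0 (Real.log (1 / |1 - s|)) ≤ 1 := max_le zero_le_one (by linarith)
      refine (ENNReal.ofReal_le_ofReal ?_).trans hlow
      calc _ ≤ c * (1 + k * 1) * X := by gcongr
        _ = c * (k + 1) * X := by ring
        _ ≤ c₁ * X := by
            gcongr
            linarith
  · by_cases hf : 1 + s ≤ 3 * |1 - s|
    · refine (hup s hs (Or.inl hf)).trans (ENNReal.ofReal_le_ofReal ?_)
      gcongr
      calc C₁ = C₁ * (1 + k * 0) := by ring
        _ ≤ _ := by
            gcongr
            · exact le_max_left _ _
            · exact le_max_left _ _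
    · obtain ⟨hs2, hD1⟩ := near_one_of_three_mul_abs_lt hf
      refine (hup' s hs2 hs1 hD1).trans (ENNReal.ofReal_le_ofReal ?_)
      have hX := one_le_three_rpow_mul_rpow_one_add (n := n) hn hs (by linarith [(abs_le.1 hD1).1])
      set L := max 0 (Real.log (1 / |1 - s|))
      have hL0 : 0 ≤ L := le_max_left _ _
      calc _ ≤ C₂ * (1 + 1 * L) := by
            rw [one_mul]
            gcongr
            exact le_max_right _ _
        _ ≤ C₂ * (1 + k * L) * (3 ^ k * (1 + s) ^ ((1 : ℝ) - n)) := by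
            refine le_mul_of_le_mul_of_nonneg_left (le_of_eq_of_le (mul_one _).symm ?_) hX ?_
            · gcongr
            · positivity
        _ = (C₂ * 3 ^ k) * (1 + k * L) * (1 + s) ^ ((1 : ℝ) - n) := by ring
        _ ≤ _ := by
            gcongr
            exact le_max_right _ _

theorem sphereIntegralF_bounds_of_one_lt (m : ℕ) (hn : 0 < m + 1) {β : ℝ} (hβ : 1 < β) :
    ∃ c C : ℝ, 0 < c ∧ 0 < C ∧ ∀ s : ℝ, 0 < s →
      ENNReal.ofReal (c * (1 + s) ^ (β - (m + 1 : ℕ))) ≤ sphereIntegralF (m + 1) hn β s ∧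
      sphereIntegralF (m + 1) hn β s ≤ ENNReal.ofReal (C * (1 + s) ^ (β - (m + 1 : ℕ))) := by
  obtain ⟨c, hc, hlow⟩ := exists_le_sphereIntegralF m hn β
  obtain ⟨C₁, hC₁, hup⟩ := exists_sphereIntegralF_le_of_far m hn β
  rcases le_or_gt 0 (β - (m + 1 : ℕ)) with hp | hp
  · exact ⟨c, C₁, hc, hC₁, fun s hs => ⟨hlow s hs, hup s hs (Or.inr hp)⟩⟩
  obtain ⟨C₂, hC₂, hup'⟩ := exists_sphereIntegralF_le_of_one_lt m hn hβ (by linarith)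
  set p := β - (m + 1 : ℕ)
  refine ⟨c, max C₁ (C₂ * 3 ^ (-p)), hc, by positivity, fun s hs => ⟨hlow s hs, ?_⟩⟩
  by_cases hf : 1 + s ≤ 3 * |1 - s|
  · refine (hup s hs (Or.inl hf)).trans (ENNReal.ofReal_le_ofReal ?_)
    gcongr
    exact le_max_left _ _
  · obtain ⟨hs2, hD1⟩ := near_one_of_three_mul_abs_lt hf
    refine (hup' s hs2).trans (ENNReal.ofReal_le_ofReal ?_)
    calc C₂ = C₂ * (3 ^ (-p) * 3 ^ p) := by
          rw [← Real.rpow_add (by norm_num)]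
          simp
      _ ≤ C₂ * (3 ^ (-p) * (1 + s) ^ p) := by
          gcongr C₂ * (_ * ?_)
          exact Real.rpow_le_rpow_of_nonpos (by positivity)
            (by linarith [(abs_le.1 hD1).1]) hp.le
      _ ≤ _ := by
          rw [← mul_assoc]
          gcongr
          exact le_max_right _ _

theorem stmt1 (n : ℕ) (hn : 0 < n) (β : ℝ) :
    ∃ c C : ℝ, 0 < c ∧ 0 < C ∧
      (β < 1 → ∀ s : ℝ, 0 < s → s ≠ 1 →
        ENNReal.ofReal (c * (1 + s) ^ ((1 : ℝ) - n) * |1 - s| ^ (β - 1))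
            ≤ sphereIntegralF n hn β s ∧
        sphereIntegralF n hn β s
            ≤ ENNReal.ofReal (C * (1 + s) ^ ((1 : ℝ) - n) * |1 - s| ^ (β - 1))) ∧
      (β = 1 → ∀ s : ℝ, 0 < s → s ≠ 1 →
        ENNReal.ofReal
            (c * (1 + ((n : ℝ) - 1) * max 0 (Real.log (1 / |1 - s|))) * (1 + s) ^ ((1 : ℝ) - n))
            ≤ sphereIntegralF n hn β s ∧
        sphereIntegralF n hn β s
            ≤ ENNReal.ofReal
              (C * (1 + ((n : ℝ) - 1) * max 0 (Real.log (1 / |1 - s|))) * (1 + s) ^ ((1 : ℝ) - n))) ∧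
      (1 < β → ∀ s : ℝ, 0 < s →
        ENNReal.ofReal (c * (1 + s) ^ (β - n)) ≤ sphereIntegralF n hn β s ∧
        sphereIntegralF n hn β s ≤ ENNReal.ofReal (C * (1 + s) ^ (β - n))) := by
  obtain ⟨m, rfl⟩ := Nat.exists_eq_add_one_of_ne_zero hn.ne'
  rcases lt_trichotomy β 1 with hβ | rfl | hβ
  · obtain ⟨c, C, hc, hC, h⟩ := sphereIntegralF_bounds_of_lt_one m hn hβ
    exact ⟨c, C, hc, hC, fun _ => h, fun h' => absurd h' hβ.ne, fun h' => absurd h' hβ.not_gt⟩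
  · obtain ⟨c, C, hc, hC, h⟩ := sphereIntegralF_bounds_one m hn
    exact ⟨c, C, hc, hC, fun h' => absurd h' (lt_irrefl _), fun _ => h,
      fun h' => absurd h' (lt_irrefl _)⟩
  · obtain ⟨c, C, hc, hC, h⟩ := sphereIntegralF_bounds_of_one_lt m hn hβ
    exact ⟨c, C, hc, hC, fun h' => absurd h' hβ.not_gt, fun h' => absurd h' hβ.ne', fun _ => h⟩
end

section
/- For every real β ≥ 0, every real α ≥ β − ⌊β⌋ (where ⌊β⌋ is the integer part of β), every n ∈ ℕ₀, and every x ∈ [−1,1], one has ((1+x)/2)^{β/2} |P_n^{(α,β)}(x)| ≤ C(n+α, n), where C(n+α, n) = (n+α)(n+α−1)⋯(α+1)/n! is the generalized binomial coefficient. In particular this holds whenever α, β ∈ ℕ₀. -/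
/-- Generalized binomial coefficient `C(t, j) = t(t-1)⋯(t-j+1)/j!`. -/
noncomputable def genChoose (t : ℝ) (j : ℕ) : ℝ :=
  (∏ i ∈ Finset.range j, (t - (i : ℝ))) / (Nat.factorial j : ℝ)

/-- Jacobi polynomial
`P_n^{(α,β)}(x) = ∑_{s=0}^n C(n+α, n-s) C(n+β, s) ((x-1)/2)^s ((x+1)/2)^{n-s}`. -/
noncomputable def jacobi (α β : ℝ) (n : ℕ) (x : ℝ) : ℝ :=
  ∑ s ∈ Finset.range (n + 1),
    genChoose ((n : ℝ) + α) (n - s) * genChoose ((n : ℝ) + β) s *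
      ((x - 1) / 2) ^ s * ((x + 1) / 2) ^ (n - s)

section Jacobi

open Polynomial

/-- The polynomial `P_n^{(0,β)}(1 - 2X)`. -/
noncomputable def jacobiPoly (β : ℝ) (n : ℕ) : ℝ[X] :=
  ∑ ab ∈ Finset.HasAntidiagonal.antidiagonal n,
    C ((-1) ^ ab.1 * (n.choose ab.1 : ℝ) * genChoose (n + β) ab.1) * (X ^ ab.1 * (1 - X) ^ ab.2)

/-- Minus the hypergeometric operator having `jacobiPoly B k` as an eigenvector. -/
noncomputable def jacobiOp (B : ℝ) : ℝ[X] →ₗ[ℝ] ℝ[X] where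
  toFun q := -(X * (1 - X) * derivative (derivative q) + (1 - C (B + 2) * X) * derivative q)
  map_add' p q := by simp only [map_add]; ring
  map_smul' c q := by simp only [smul_eq_C_mul, derivative_C_mul, RingHom.id_apply]; ring

theorem jacobiOp_apply (B : ℝ) (q : ℝ[X]) : jacobiOp B q =
    -(X * (1 - X) * derivative (derivative q) + (1 - C (B + 2) * X) * derivative q) := rfl

theorem genChoose_zero (t : ℝ) : genChoose t 0 = 1 := by simp [genChoose]

theorem genChoose_succ (t : ℝ) (j : ℕ) :
    (j + 1) * genChoose t (j + 1) = (t - j) * genChoose t j := by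
  have : (j.factorial : ℝ) ≠ 0 := by positivity
  rw [genChoose, genChoose, Finset.prod_range_succ, Nat.factorial_succ]
  push_cast
  field_simp

theorem jacobiOp_mul_pow (B : ℝ) (a b : ℕ) :
    jacobiOp B (X ^ a * (1 - X) ^ b) =
      C ((a + b : ℝ) * (a + b + B + 1)) * (X ^ a * (1 - X) ^ b) -
        (C ((a : ℝ) ^ 2) * (X ^ (a - 1) * (1 - X) ^ b) +
          C (b * (b + B) : ℝ) * (X ^ a * (1 - X) ^ (b - 1))) := by
  have h2 : C (2 : ℝ) = (2 : ℝ[X]) := map_ofNat C 2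
  rw [jacobiOp_apply]
  rcases a with _ | _ | a <;> rcases b with _ | _ | b <;>
  simp [derivative_pow, derivative_mul, h2] <;> ring

theorem jacobiOp_jacobiPoly (B : ℝ) (n : ℕ) :
    jacobiOp B (jacobiPoly B n) = C ((n : ℝ) * (n + B + 1)) * jacobiPoly B n := by
  have key : ∑ ab ∈ Finset.HasAntidiagonal.antidiagonal n,
      C ((-1) ^ ab.1 * (n.choose ab.1 : ℝ) * genChoose (n + B) ab.1) *
        (C ((ab.1 : ℝ) ^ 2) * (X ^ (ab.1 - 1) * (1 - X) ^ ab.2) +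
          C (ab.2 * (ab.2 + B) : ℝ) * (X ^ ab.1 * (1 - X) ^ (ab.2 - 1))) = 0 := by
    rcases n with _ | m
    · simp
    simp only [mul_add, Finset.sum_add_distrib]
    rw [Finset.Nat.sum_antidiagonal_succ]
    rw [Finset.Nat.sum_antidiagonal_succ' (n := m)]
    simp only [Nat.cast_zero, ne_eq, OfNat.ofNat_ne_zero, not_false_eq_true, zero_pow, map_zero,
      zero_mul, mul_zero, zero_add, add_zero, Nat.add_sub_cancel]
    rw [← Finset.sum_add_distrib]
    refine Finset.sum_eq_zero fun ab hab => ?_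
    obtain ⟨a, b⟩ := ab
    rw [Finset.HasAntidiagonal.mem_antidiagonal] at hab
    simp only at hab ⊢
    have h1 := genChoose_succ (((m + 1 : ℕ) : ℝ) + B) a
    have h2 : (((m + 1).choose (a + 1) : ℕ) : ℝ) * (a + 1) = ((m + 1).choose a) * (b + 1) := by
      have := Nat.choose_succ_right_eq (m + 1) a
      rw [show m + 1 - a = b + 1 by omega] at this
      exact_mod_cast this
    have h3 : ((m + 1 : ℕ) : ℝ) + B - a = b + 1 + B := by rw [← hab]; push_cast; ring
    rw [h3] at h1
    have h4 : (-1) ^ (a + 1) * ((m + 1).choose (a + 1) : ℝ) *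
          genChoose ((m + 1 : ℕ) + B) (a + 1) * ((a + 1 : ℕ) : ℝ) ^ 2 +
        (-1) ^ a * ((m + 1).choose a : ℝ) * genChoose ((m + 1 : ℕ) + B) a *
          (((b + 1 : ℕ) : ℝ) * ((b + 1 : ℕ) + B)) = 0 := by
      push_cast at *
      rw [pow_succ]
      linear_combination (-(-1) ^ a * (b + 1 + B) * genChoose (m + 1 + B) a) * h2 -
        ((-1) ^ a * ((m + 1).choose (a + 1) : ℝ) * (a + 1)) * h1
    simp only [← mul_add]
    rw [← mul_assoc (C _) (C _), ← mul_assoc (C _) (C _), ← C_mul, ← C_mul, ← add_mul, ← C_add, h4,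
      C_0, zero_mul]
  conv_lhs => rw [jacobiPoly, map_sum]
  rw [← sub_zero (C _ * _), ← key, jacobiPoly, Finset.mul_sum, ← Finset.sum_sub_distrib]
  refine Finset.sum_congr rfl fun ab hab => ?_
  rw [Finset.HasAntidiagonal.mem_antidiagonal] at hab
  rw [← smul_eq_C_mul, map_smul, jacobiOp_mul_pow, ← hab]
  simp only [smul_eq_C_mul]
  push_cast
  ring

theorem jacobiPoly_eval_zero (B : ℝ) (n : ℕ) : (jacobiPoly B n).eval 0 = 1 := by
  rw [jacobiPoly, eval_finsetSum, Finset.sum_eq_single (0, n)]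
  · simp [genChoose_zero]
  · rintro ⟨a, b⟩ h1 h2
    rw [Finset.HasAntidiagonal.mem_antidiagonal] at h1
    have : a ≠ 0 := by rintro rfl; simp_all
    simp [this]
  · simp

theorem natDegree_jacobiPoly_le (B : ℝ) (n : ℕ) : (jacobiPoly B n).natDegree ≤ n := by
  refine natDegree_sum_le_of_forall_le _ (n := n) _ fun ab hab => ?_
  rw [Finset.HasAntidiagonal.mem_antidiagonal] at hab
  refine (natDegree_C_mul_le _ _).trans ?_
  refine natDegree_mul_le.trans ?_
  rw [natDegree_X_pow]
  have : ((1 - X : ℝ[X]) ^ ab.2).natDegree ≤ ab.2 := by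
    refine natDegree_pow_le.trans ?_
    have : (1 - X : ℝ[X]).natDegree ≤ 1 := by compute_degree
    nlinarith
  omega

theorem coeff_jacobiOp (B : ℝ) (q : ℝ[X]) (i : ℕ) : (jacobiOp B q).coeff i =
    i * (i + B + 1) * q.coeff i - (i + 1) ^ 2 * q.coeff (i + 1) := by
  have : jacobiOp B q = X * (X * derivative (derivative q)) - X * derivative (derivative q)
      - derivative q + C (B + 2) * (X * derivative q) := by
    rw [jacobiOp_apply]; ring
  rw [this]
  simp only [coeff_add, coeff_sub, coeff_C_mul]
  rcases i with _ | _ | i <;> simp [coeff_derivative, coeff_X_mul] <;> ring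

theorem coeff_jacobiPoly_ne_zero {B : ℝ} (hB : 0 ≤ B) (n : ℕ) :
    (jacobiPoly B n).coeff n ≠ 0 := by
  have key : ∀ i ≤ n, (jacobiPoly B n).coeff i ≠ 0 := by
    intro i
    induction i with
    | zero => rw [coeff_zero_eq_eval_zero, jacobiPoly_eval_zero]; simp
    | succ i ih =>
      intro hi h0
      have h := congrArg (fun q => coeff q i) (jacobiOp_jacobiPoly B n)
      simp only [coeff_jacobiOp, coeff_C_mul, h0] at h
      have hin : (i : ℝ) < n := by exact_mod_cast hi
      have h1 : ((n : ℝ) - i) * (n + i + B + 1) * (jacobiPoly B n).coeff i = 0 := by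
        linear_combination -h
      have h2 : (0 : ℝ) ≤ i := by positivity
      refine ih (by omega) ((mul_eq_zero.mp h1).resolve_left (ne_of_gt ?_))
      apply mul_pos <;> linarith
  exact key n le_rfl

theorem exists_eq_sum_jacobiPoly {B : ℝ} (hB : 0 ≤ B) (N : ℕ) (q : ℝ[X]) (hq : q.degree < N) :
    ∃ c : ℕ → ℝ, q = ∑ k ∈ Finset.range N, C (c k) * jacobiPoly B k := by
  induction N generalizing q with
  | zero => exact ⟨0, by simpa using hq⟩
  | succ N ih =>
    obtain ⟨c, hc⟩ := ih (q - C (q.coeff N / (jacobiPoly B N).coeff N) * jacobiPoly B N) (by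
      rw [degree_lt_iff_coeff_zero] at hq ⊢
      intro m hm
      rcases hm.eq_or_lt with rfl | hm
      · simp [coeff_jacobiPoly_ne_zero hB]
      · rw [coeff_sub, coeff_C_mul, hq m hm, coeff_eq_zero_of_natDegree_lt
          ((natDegree_jacobiPoly_le B N).trans_lt hm)]
        simp)
    refine ⟨fun k => if k = N then q.coeff N / (jacobiPoly B N).coeff N else c k, ?_⟩
    simp only [Finset.sum_range_succ, if_true]
    rw [← sub_eq_iff_eq_add, hc]
    refine Finset.sum_congr rfl fun k hk => ?_
    rw [if_neg (Finset.mem_range.mp hk).ne]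

/-- The antiderivative vanishing at `0`. -/
noncomputable def antideriv (q : ℝ[X]) : ℝ[X] := q.sum fun i a => monomial (i + 1) (a / (i + 1))

theorem derivative_antideriv (q : ℝ[X]) : derivative (antideriv q) = q := by
  conv_rhs => rw [← q.sum_monomial_eq]
  rw [antideriv, Polynomial.sum, Polynomial.sum, derivative_sum]
  refine Finset.sum_congr rfl fun i _ => ?_
  rw [derivative_monomial]
  have : (i : ℝ) + 1 ≠ 0 := by positivity
  congr 1
  push_cast
  field_simp

theorem antideriv_eval_zero (q : ℝ[X]) : (antideriv q).eval 0 = 0 := by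
  simp [antideriv, Polynomial.sum, eval_finsetSum]

theorem eq_zero_of_derivative_eq_zero_of_eval_zero {q : ℝ[X]} (h : derivative q = 0)
    (h0 : q.eval 0 = 0) : q = 0 := by
  rw [eq_C_of_derivative_eq_zero h, coeff_zero_eq_eval_zero, h0, C_0]

/-- The hypergeometric expression satisfied by the `r`-th derivative of `jacobiPoly β n`
(a `-r`-fold antiderivative if `r < 0`). -/
noncomputable def ladderODE (β n r : ℝ) (y : ℝ[X]) : ℝ[X] :=
  X * (1 - X) * derivative (derivative y) + (C (1 + r) - C (β + 2 + 2 * r) * X) * derivative y +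
    C ((n - r) * (n + r + β + 1)) * y

theorem derivative_ladderODE (β n r : ℝ) (y : ℝ[X]) :
    derivative (ladderODE β n r y) = ladderODE β n (r + 1) (derivative y) := by
  have h2 : C (2 : ℝ) = (2 : ℝ[X]) := map_ofNat C 2
  simp only [ladderODE, derivative_mul, derivative_X, derivative_one, derivative_C,
    derivative_ofNat, map_add, map_mul, map_sub, map_one, h2]
  ring

theorem ladderODE_iterate_derivative {β : ℝ} {n : ℕ} (r : ℕ) :
    ladderODE β n r (derivative^[r] (jacobiPoly β n)) = 0 := by
  induction r with
  | zero =>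
    have h := jacobiOp_jacobiPoly β n
    rw [jacobiOp_apply] at h
    simp only [ladderODE, Nat.cast_zero, Function.iterate_zero, id, add_zero, sub_zero, mul_zero,
      C_1]
    linear_combination -h
  | succ r ih =>
    rw [Function.iterate_succ_apply', Nat.cast_succ, ← derivative_ladderODE, ih, derivative_zero]

theorem antideriv_iterate_eval_zero {r : ℕ} (hr : r ≠ 0) (q : ℝ[X]) :
    (antideriv^[r] q).eval 0 = 0 := by
  obtain ⟨r, rfl⟩ := Nat.exists_eq_succ_of_ne_zero hr
  rw [Function.iterate_succ_apply', antideriv_eval_zero]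

theorem ladderODE_iterate_antideriv {β : ℝ} {n : ℕ} (r : ℕ) :
    ladderODE β n (-r) (antideriv^[r] (jacobiPoly β n)) = 0 := by
  induction r with
  | zero => simpa using ladderODE_iterate_derivative (β := β) (n := n) 0
  | succ r ih =>
    apply eq_zero_of_derivative_eq_zero_of_eval_zero
    · rw [derivative_ladderODE, Function.iterate_succ_apply', derivative_antideriv, ← ih]
      congr 1
      push_cast
      ring
    · simp only [ladderODE, Function.iterate_succ_apply', derivative_antideriv]
      rcases eq_or_ne r 0 with rfl | hr
      · simp [antideriv_eval_zero]
      · simp [antideriv_eval_zero, antideriv_iterate_eval_zero hr]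

/-- Products of a derivative and an antiderivative of the same order. -/
noncomputable def ladderProd (β : ℝ) (n r : ℕ) : ℝ[X] :=
  derivative^[r] (jacobiPoly β n) * antideriv^[r] (jacobiPoly β n)

theorem jacobiOp_ladderProd_zero (β : ℝ) (n : ℕ) :
    jacobiOp (2 * β) (ladderProd β n 0) = C (2 * (n * (n + β + 1)) : ℝ) * ladderProd β n 0 +
      C (2 * ((n + 1) * (n + β)) : ℝ) * ladderProd β n 1 := by
  have h2 : C (2 : ℝ) = (2 : ℝ[X]) := map_ofNat C 2
  have e0 := ladderODE_iterate_derivative (β := β) (n := n) 0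
  have e1 := ladderODE_iterate_antideriv (β := β) (n := n) 1
  simp only [ladderODE, ladderProd, jacobiOp_apply, Function.iterate_zero, id,
    Function.iterate_one, derivative_antideriv, Nat.cast_zero, Nat.cast_one,
    derivative_mul, map_add, map_mul, map_sub, map_one, map_zero, map_neg, h2] at e0 e1 ⊢
  linear_combination (-2 * jacobiPoly β n) * e0 - 2 * derivative (jacobiPoly β n) * e1

theorem jacobiOp_ladderProd_succ (β : ℝ) (n r : ℕ) :
    jacobiOp (2 * β) (ladderProd β n (r + 1)) =
      C ((n - (r + 1)) * (n + (r + 1) + β + 1) + (n + (r + 1)) * (n - (r + 1) + β + 1) : ℝ) *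
          ladderProd β n (r + 1) +
        C ((n + (r + 1) + 1) * (n - (r + 1) + β) : ℝ) * ladderProd β n (r + 2) +
        C ((n - r) * (n + r + β + 1) : ℝ) * ladderProd β n r := by
  have h2 : C (2 : ℝ) = (2 : ℝ[X]) := map_ofNat C 2
  have e0 := ladderODE_iterate_derivative (β := β) (n := n) r
  have e1 := ladderODE_iterate_derivative (β := β) (n := n) (r + 1)
  have f1 := ladderODE_iterate_antideriv (β := β) (n := n) (r + 1)
  have f2 := ladderODE_iterate_antideriv (β := β) (n := n) (r + 2)
  simp only [ladderODE, ladderProd, jacobiOp_apply, Function.iterate_succ_apply',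
    derivative_antideriv, Nat.cast_add, Nat.cast_one, Nat.cast_ofNat,
    derivative_mul, map_add, map_mul, map_sub, map_one, map_neg, h2] at e0 e1 f1 f2 ⊢
  generalize derivative^[r] (jacobiPoly β n) = y at *
  generalize antideriv^[r] (jacobiPoly β n) = z at *
  linear_combination (-antideriv z) * e1 - derivative y * f1 - z * e0 -
    derivative (derivative y) * f2

theorem ladderProd_eval_zero (β : ℝ) (n r : ℕ) :
    (ladderProd β n r).eval 0 = if r = 0 then 1 else 0 := by
  rw [ladderProd, eval_mul]
  split_ifs with h
  · simp [h, jacobiPoly_eval_zero]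
  · rw [antideriv_iterate_eval_zero h, mul_zero]

theorem ladderProd_succ_self (β : ℝ) (n : ℕ) : ladderProd β n (n + 1) = 0 := by
  rw [ladderProd, iterate_derivative_eq_zero
    (Nat.lt_succ_of_le (natDegree_jacobiPoly_le β n)), zero_mul]

/-- Coefficient of `ladderProd β n (r + 1)` in the image of `ladderProd β n r`. -/
noncomputable def ladderUp (β : ℝ) (n r : ℕ) : ℝ :=
  (if r = 0 then 2 else 1) * ((n + r + 1) * (n - r + β))

/-- Coefficient of `ladderProd β n r` in the image of `ladderProd β n (r + 1)`. -/
noncomputable def ladderDown (β : ℝ) (n r : ℕ) : ℝ := (n - r) * (n + r + β + 1)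

/-- The matrix of `jacobiOp (2 * β)` on the span of the `ladderProd β n r`. -/
noncomputable def ladderMatrix (β : ℝ) (n : ℕ) : Matrix (Fin (n + 1)) (Fin (n + 1)) ℝ :=
  fun i j => (if (j : ℕ) = i then
      (n - i : ℝ) * (n + i + β + 1) + (n + i) * (n - i + β + 1) else 0) +
    (if (j : ℕ) = i + 1 then ladderUp β n i else 0) +
    (if (i : ℕ) = j + 1 then ladderDown β n j else 0)

theorem jacobiOp_ladderProd (β : ℝ) (n : ℕ) (i : Fin (n + 1)) :
    jacobiOp (2 * β) (ladderProd β n i) =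
      ∑ j, C (ladderMatrix β n i j) * ladderProd β n j := by
  obtain ⟨i, hi⟩ := i
  simp only [ladderMatrix]
  rw [Fin.sum_univ_eq_sum_range (fun j => C ((if j = i then
      (n - i : ℝ) * (n + i + β + 1) + (n + i) * (n - i + β + 1) else 0) +
    (if j = i + 1 then ladderUp β n i else 0) +
    (if i = j + 1 then ladderDown β n j else 0)) * ladderProd β n j) (n + 1)]
  have hup : C (ladderUp β n i) * ladderProd β n (i + 1) =
      if i + 1 < n + 1 then C (ladderUp β n i) * ladderProd β n (i + 1) else 0 := by
    split_ifs with h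
    · rfl
    · obtain rfl : i = n := by omega
      rw [ladderProd_succ_self, mul_zero]
  simp only [C_add, add_mul, Finset.sum_add_distrib, apply_ite C, C_0, ite_mul, zero_mul,
    Finset.sum_ite_eq', Finset.mem_range, hi, if_true]
  rw [← hup]
  rcases i with _ | i
  · simp only [zero_add, jacobiOp_ladderProd_zero, ladderUp, Nat.cast_zero, add_zero, sub_zero,
      if_true]
    simp [map_ofNat C 2]
    ring
  · have hi' : i < n + 1 := by omega
    simp only [add_left_inj, Finset.sum_ite_eq, Finset.mem_range, hi', if_true,
      jacobiOp_ladderProd_succ, ladderUp, ladderDown, Nat.succ_ne_zero, if_false, one_mul,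
      Nat.cast_succ, C_add, add_mul]

/-- Weights symmetrizing `ladderMatrix`. -/
noncomputable def ladderWeight (β : ℝ) (n r : ℕ) : ℝ :=
  ∏ i ∈ Finset.range r, ladderUp β n i / ladderDown β n i

theorem ladderUp_pos {β : ℝ} (hβ : 0 ≤ β) {n r : ℕ} (h : r < n) : 0 < ladderUp β n r := by
  have : (r : ℝ) < n := by exact_mod_cast h
  have h1 : (0 : ℝ) < n - r + β := by linarith
  rw [ladderUp]
  split_ifs <;> positivity

theorem ladderDown_pos {β : ℝ} (hβ : 0 ≤ β) {n r : ℕ} (h : r < n) : 0 < ladderDown β n r := by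
  have : (r : ℝ) < n := by exact_mod_cast h
  have h1 : (0 : ℝ) < n - r := by linarith
  rw [ladderDown]
  positivity

theorem ladderWeight_pos {β : ℝ} (hβ : 0 ≤ β) {n r : ℕ} (h : r ≤ n) : 0 < ladderWeight β n r :=
  Finset.prod_pos fun i hi => by
    have : i < n := (Finset.mem_range.mp hi).trans_le h
    exact div_pos (ladderUp_pos hβ this) (ladderDown_pos hβ this)

theorem ladderMatrix_symm {β : ℝ} (hβ : 0 ≤ β) (n : ℕ) :
    Matrix.diagonal (fun i : Fin (n + 1) => ladderWeight β n i) * ladderMatrix β n =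
      (ladderMatrix β n).transpose *
        Matrix.diagonal (fun i : Fin (n + 1) => ladderWeight β n i) := by
  have key : ∀ i < n, ladderWeight β n i * ladderUp β n i =
      ladderDown β n i * ladderWeight β n (i + 1) := by
    intro i hi
    have := (ladderDown_pos hβ hi).ne'
    rw [ladderWeight, ladderWeight, Finset.prod_range_succ]
    field_simp
  ext ⟨i, hi⟩ ⟨j, hj⟩
  rw [Matrix.diagonal_mul, Matrix.mul_diagonal, Matrix.transpose_apply]
  simp only [ladderMatrix]
  rcases lt_trichotomy i j with h | rfl | h
  · by_cases h1 : j = i + 1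
    · subst h1
      simpa [show i ≠ i + 1 + 1 by omega] using key i (by omega)
    · rw [if_neg (by omega), if_neg h1, if_neg (by omega), if_neg (by omega), if_neg (by omega),
        if_neg (by omega)]
      ring
  · simp [mul_comm]
  · by_cases h1 : i = j + 1
    · subst h1
      simpa [mul_comm, show j ≠ j + 1 + 1 by omega] using (key j (by omega)).symm
    · rw [if_neg (by omega), if_neg (by omega), if_neg (by omega), if_neg (by omega), if_neg h1,
        if_neg (by omega)]
      ring

theorem aeval_jacobiOp_ladderProd (β : ℝ) (n : ℕ) (q : ℝ[X]) (i : Fin (n + 1)) :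
    aeval (jacobiOp (2 * β)) q (ladderProd β n i) =
      ∑ j, C (aeval (ladderMatrix β n) q i j) * ladderProd β n j := by
  induction q using Polynomial.induction_on with
  | C a =>
    simp [Matrix.algebraMap_matrix_apply, apply_ite C, smul_eq_C_mul]
  | add p q hp hq => simp [hp, hq, add_mul, Finset.sum_add_distrib]
  | monomial m a ih =>
    rw [pow_succ, ← mul_assoc]
    generalize C a * X ^ m = p at *
    rw [map_mul (aeval (ladderMatrix β n)), mul_comm p, map_mul, aeval_X, aeval_X,
      Module.End.mul_apply, ih, map_sum]
    simp only [← smul_eq_C_mul, map_smul, jacobiOp_ladderProd, Matrix.mul_apply, Finset.sum_smul,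
      Finset.smul_sum, smul_smul]
    exact Finset.sum_comm

theorem aeval_ladderMatrix_symm {β : ℝ} (hβ : 0 ≤ β) (n : ℕ) (q : ℝ[X]) :
    Matrix.diagonal (fun i : Fin (n + 1) => ladderWeight β n i) * aeval (ladderMatrix β n) q =
      (aeval (ladderMatrix β n) q).transpose *
        Matrix.diagonal (fun i : Fin (n + 1) => ladderWeight β n i) := by
  induction q using Polynomial.induction_on with
  | C a =>
    rw [aeval_C, Matrix.algebraMap_eq_diagonal]
    simp [mul_comm]
  | add p q hp hq => rw [map_add, mul_add, hp, hq, Matrix.transpose_add, add_mul]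
  | monomial m a ih =>
    rw [pow_succ, ← mul_assoc]
    generalize C a * X ^ m = p at *
    rw [map_mul, aeval_X, ← mul_assoc, ih, mul_assoc, ladderMatrix_symm hβ, ← mul_assoc,
      ← Matrix.transpose_mul]
    congr 2
    have h := map_mul (aeval (ladderMatrix β n)) p X
    rw [mul_comm, map_mul, aeval_X] at h
    exact h

theorem aeval_mul_self_ladderMatrix_nonneg {β : ℝ} (hβ : 0 ≤ β) (n : ℕ) (q : ℝ[X]) :
    0 ≤ aeval (ladderMatrix β n) (q * q) 0 0 := by
  rw [map_mul, Matrix.mul_apply]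
  refine Finset.sum_nonneg fun j _ => ?_
  have h := congrFun (congrFun (aeval_ladderMatrix_symm hβ n q) 0) j
  rw [Matrix.diagonal_mul, Matrix.mul_diagonal, Matrix.transpose_apply] at h
  have h0 := ladderWeight_pos hβ (Nat.zero_le n)
  have hj := ladderWeight_pos hβ (Nat.lt_succ_iff.mp j.2)
  have h1 : aeval (ladderMatrix β n) q 0 j * aeval (ladderMatrix β n) q j 0 =
      aeval (ladderMatrix β n) q j 0 ^ 2 * ladderWeight β n j / ladderWeight β n 0 := by
    rw [eq_div_iff h0.ne']
    simp only [Fin.val_zero] at h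
    linear_combination aeval (ladderMatrix β n) q j 0 * h
  rw [h1]
  positivity

theorem aeval_jacobiOp_jacobiPoly (B : ℝ) (k : ℕ) (q : ℝ[X]) :
    aeval (jacobiOp B) q (jacobiPoly B k) =
      C (q.eval ((k : ℝ) * (k + B + 1))) * jacobiPoly B k := by
  induction q using Polynomial.induction_on with
  | C a => simp [smul_eq_C_mul]
  | add p q hp hq => simp [hp, hq, add_mul]
  | monomial m a ih =>
    rw [pow_succ, ← mul_assoc]
    generalize C a * X ^ m = p at *
    rw [map_mul, aeval_X, Module.End.mul_apply, jacobiOp_jacobiPoly, ← smul_eq_C_mul, map_smul, ih,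
      eval_mul, eval_X, smul_eq_C_mul, ← mul_assoc, ← C_mul, mul_comm (eval _ _)]

theorem jacobiEigenvalue_injective {B : ℝ} (hB : 0 ≤ B) :
    Function.Injective fun k : ℕ => (k : ℝ) * (k + B + 1) := by
  apply StrictMono.injective
  intro a b hab
  have h : (a : ℝ) < b := by exact_mod_cast hab
  have ha : (0 : ℝ) ≤ a := by positivity
  simp only
  nlinarith

/-- The square of a Jacobi polynomial `P_n^{(0,β)}` is a convex combination of the normalized
Jacobi polynomials `P_k^{(0,2β)}`. -/
theorem jacobiPoly_sq_eq_sum {β : ℝ} (hβ : 0 ≤ β) (n : ℕ) :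
    ∃ c : ℕ → ℝ, (∀ k ∈ Finset.range (2 * n + 1), 0 ≤ c k) ∧
      ∑ k ∈ Finset.range (2 * n + 1), c k = 1 ∧
      jacobiPoly β n ^ 2 =
        ∑ k ∈ Finset.range (2 * n + 1), C (c k) * jacobiPoly (2 * β) k := by
  have h2β : 0 ≤ 2 * β := by positivity
  obtain ⟨c, hc⟩ := exists_eq_sum_jacobiPoly h2β (2 * n + 1) (jacobiPoly β n ^ 2) (by
    refine degree_le_natDegree.trans_lt ?_
    have h := natDegree_pow_le_of_le 2 (natDegree_jacobiPoly_le β n)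
    exact_mod_cast Nat.lt_succ_of_le h)
  refine ⟨c, fun k hk => ?_, ?_, hc⟩
  · set q := Lagrange.basis (Finset.range (2 * n + 1))
      (fun k : ℕ => (k : ℝ) * (k + 2 * β + 1)) k with hq
    have h := aeval_mul_self_ladderMatrix_nonneg hβ n q
    have h1 := congrArg (eval 0) (aeval_jacobiOp_ladderProd β n (q * q) 0)
    have h2 : ladderProd β n (0 : Fin (n + 1)) = jacobiPoly β n ^ 2 := by simp [ladderProd, sq]
    rw [h2, hc, map_sum, eval_finsetSum, eval_finsetSum, Finset.sum_eq_single k,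
      Finset.sum_eq_single 0] at h1
    · rw [← smul_eq_C_mul, map_smul, aeval_jacobiOp_jacobiPoly, eval_mul, hq,
        Lagrange.eval_basis_self (jacobiEigenvalue_injective h2β).injOn hk] at h1
      simp only [smul_eq_C_mul, eval_mul, eval_C, jacobiPoly_eval_zero, mul_one, Fin.val_zero,
        ladderProd_eval_zero, if_true, C_1, eval_one] at h1
      rw [h1]
      exact h
    · intro j _ hj
      rw [eval_mul, ladderProd_eval_zero, if_neg (Fin.val_ne_zero_iff.mpr hj), mul_zero]
    · simp
    · intro j hj hjk
      have hqj : q.eval ((j : ℝ) * (j + 2 * β + 1)) = 0 :=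
        Lagrange.eval_basis_of_ne (v := fun k : ℕ => (k : ℝ) * (k + 2 * β + 1)) hjk.symm hj
      rw [← smul_eq_C_mul, map_smul, aeval_jacobiOp_jacobiPoly, eval_mul, hqj]
      simp
    · exact fun h => absurd hk h
  · have := congrArg (eval 0) hc
    simpa [eval_finsetSum, jacobiPoly_eval_zero] using this.symm

theorem continuous_rpow_mul_eval {B : ℝ} (hB : 0 ≤ B) (q : ℝ[X]) :
    Continuous fun t : ℝ => t ^ B * q.eval (1 - t) :=
  (Real.continuous_rpow_const hB).mul (q.continuous.comp (continuous_const.sub continuous_id))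

/-- Integration against `(1 - X) ^ B` over the unit interval. -/
noncomputable def weightIntegral {B : ℝ} (hB : 0 ≤ B) : ℝ[X] →ₗ[ℝ] ℝ where
  toFun q := ∫ t in (0 : ℝ)..1, t ^ B * q.eval (1 - t)
  map_add' p q := by
    simp only [eval_add, mul_add]
    exact intervalIntegral.integral_add
      ((continuous_rpow_mul_eval hB p).intervalIntegrable 0 1)
      ((continuous_rpow_mul_eval hB q).intervalIntegrable 0 1)
  map_smul' c q := by
    rw [RingHom.id_apply, smul_eq_mul, ← intervalIntegral.integral_const_mul]
    exact intervalIntegral.integral_congr fun t _ => by simp [mul_left_comm]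

theorem weightIntegral_apply {B : ℝ} (hB : 0 ≤ B) (q : ℝ[X]) :
    weightIntegral hB q = ∫ t in (0 : ℝ)..1, t ^ B * q.eval (1 - t) := rfl

theorem weightIntegral_by_parts {B : ℝ} (hB : 0 ≤ B) (q : ℝ[X]) :
    weightIntegral hB (C (B + 1) * q - (1 - X) * derivative q) = q.eval 0 := by
  have hd : ∀ t ∈ Set.uIcc (0 : ℝ) 1, HasDerivAt (fun t : ℝ => t ^ (B + 1) * q.eval (1 - t))
      (t ^ B * (C (B + 1) * q - (1 - X) * derivative q).eval (1 - t)) t := by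
    intro t ht
    rw [Set.uIcc_of_le zero_le_one] at ht
    have h1 := Real.hasDerivAt_rpow_const (x := t) (p := B + 1) (Or.inr (by linarith))
    have h2 := (q.hasDerivAt (1 - t)).comp t ((hasDerivAt_id t).const_sub 1)
    refine (h1.mul h2).congr_deriv ?_
    simp only [eval_sub, eval_mul, eval_C, eval_one, eval_X, add_sub_cancel_right,
      Function.comp_apply]
    rw [Real.rpow_add_one' ht.1 (by linarith)]
    ring
  rw [weightIntegral_apply, intervalIntegral.integral_eq_sub_of_hasDerivAt hd
    ((continuous_rpow_mul_eval hB _).intervalIntegrable 0 1)]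
  rw [Real.zero_rpow (by linarith)]
  simp

theorem weightIntegral_jacobiOp_symm {B : ℝ} (hB : 0 ≤ B) (y z : ℝ[X]) :
    weightIntegral hB (z * jacobiOp B y) = weightIntegral hB (y * jacobiOp B z) := by
  have h2 : C (2 : ℝ) = (2 : ℝ[X]) := map_ofNat C 2
  have h := weightIntegral_by_parts hB (X * (z * derivative y - y * derivative z))
  rw [eval_mul, eval_X, zero_mul] at h
  rw [← sub_eq_zero, ← map_sub, ← h]
  congr 1
  simp only [jacobiOp_apply, derivative_mul, derivative_X, map_add, map_sub, map_one, h2]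
  ring

theorem weightIntegral_jacobiPoly_mul_of_ne {B : ℝ} (hB : 0 ≤ B) {j k : ℕ} (hjk : j ≠ k) :
    weightIntegral hB (jacobiPoly B k * jacobiPoly B j) = 0 := by
  have h := weightIntegral_jacobiOp_symm hB (jacobiPoly B j) (jacobiPoly B k)
  rw [jacobiOp_jacobiPoly, jacobiOp_jacobiPoly, mul_left_comm, mul_left_comm (jacobiPoly B j),
    mul_comm (jacobiPoly B j) (jacobiPoly B k), ← smul_eq_C_mul, ← smul_eq_C_mul, map_smul,
    map_smul, smul_eq_mul, smul_eq_mul] at h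
  by_contra h0
  exact hjk (jacobiEigenvalue_injective hB (mul_right_cancel₀ h0 h))

theorem weightIntegral_jacobiPoly_mul_of_degree_lt {B : ℝ} (hB : 0 ≤ B) {k : ℕ} {q : ℝ[X]}
    (hq : q.degree < k) : weightIntegral hB (jacobiPoly B k * q) = 0 := by
  obtain ⟨c, rfl⟩ := exists_eq_sum_jacobiPoly hB k q hq
  rw [Finset.mul_sum, map_sum]
  refine Finset.sum_eq_zero fun j hj => ?_
  rw [mul_left_comm, ← smul_eq_C_mul, map_smul,
    weightIntegral_jacobiPoly_mul_of_ne hB (Finset.mem_range.mp hj).ne, smul_zero]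

theorem weightIntegral_jacobiPoly_sq {B : ℝ} (hB : 0 ≤ B) (k : ℕ) :
    (B + 1 + 2 * k) * weightIntegral hB (jacobiPoly B k ^ 2) = 1 := by
  have hdeg : ((1 - X) * derivative (jacobiPoly B k) + C (k : ℝ) * jacobiPoly B k).degree <
      (k : WithBot ℕ) := by
    rw [degree_lt_iff_coeff_zero]
    intro m hm
    have h0 : (jacobiPoly B k).coeff (m + 1) = 0 := coeff_eq_zero_of_natDegree_lt
      ((natDegree_jacobiPoly_le B k).trans_lt (Nat.lt_succ_of_le hm))
    have h1 : ((k : ℝ) - m) * (jacobiPoly B k).coeff m = 0 := by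
      rcases hm.eq_or_lt with rfl | hm
      · simp
      · rw [coeff_eq_zero_of_natDegree_lt ((natDegree_jacobiPoly_le B k).trans_lt hm), mul_zero]
    rw [sub_mul, one_mul, coeff_add, coeff_sub, coeff_C_mul, coeff_derivative, h0]
    rcases m with _ | m
    · simpa using h1
    · rw [coeff_X_mul, coeff_derivative]
      push_cast at h1
      linear_combination h1
  have h := weightIntegral_jacobiPoly_mul_of_degree_lt hB hdeg
  have h1 := weightIntegral_by_parts hB (jacobiPoly B k ^ 2)
  rw [eval_pow, jacobiPoly_eval_zero, one_pow] at h1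
  have h2 : C (B + 1) * jacobiPoly B k ^ 2 - (1 - X) * derivative (jacobiPoly B k ^ 2) =
      (B + 1 + 2 * k) • jacobiPoly B k ^ 2 - (2 : ℝ) • (jacobiPoly B k *
        ((1 - X) * derivative (jacobiPoly B k) + C (k : ℝ) * jacobiPoly B k)) := by
    have h2 : C (2 : ℝ) = (2 : ℝ[X]) := map_ofNat C 2
    simp only [smul_eq_C_mul, sq, derivative_mul, map_add, map_mul, map_one, h2]
    ring
  rw [h2, map_sub, map_smul, map_smul, h, smul_zero, sub_zero, smul_eq_mul] at h1
  exact h1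

theorem integral_rpow_mul_jacobiPoly_pow_le {β : ℝ} (hβ : 0 ≤ β) (n j : ℕ) :
    ∫ t in (0 : ℝ)..1, t ^ (2 ^ j * β) * (jacobiPoly β n).eval (1 - t) ^ 2 ^ (j + 1) ≤ 1 := by
  induction j generalizing β n with
  | zero =>
    have h := weightIntegral_jacobiPoly_sq hβ n
    simp only [weightIntegral_apply, eval_pow] at h
    simp only [pow_zero, one_mul, zero_add, pow_one]
    have hn : (0 : ℝ) ≤ n := n.cast_nonneg
    have h0 : 0 ≤ ∫ t in (0 : ℝ)..1, t ^ β * (jacobiPoly β n).eval (1 - t) ^ 2 :=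
      intervalIntegral.integral_nonneg zero_le_one fun t ht =>
        mul_nonneg (Real.rpow_nonneg ht.1 _) (sq_nonneg _)
    nlinarith
  | succ j ih =>
    obtain ⟨c, hc0, hc1, hc⟩ := jacobiPoly_sq_eq_sum hβ n
    have hcont : ∀ {B : ℝ} (_ : 0 ≤ B) (q : ℝ[X]) (m : ℕ),
        Continuous fun t : ℝ => t ^ B * q.eval (1 - t) ^ m := fun hB q m => by
      simpa only [eval_pow] using continuous_rpow_mul_eval hB (q ^ m)
    have hcont' := fun k : ℕ => hcont (show 0 ≤ 2 ^ j * (2 * β) by positivity)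
      (jacobiPoly (2 * β) k) (2 ^ (j + 1))
    have hle : ∀ t ∈ Set.Icc (0 : ℝ) 1,
        t ^ (2 ^ (j + 1) * β) * (jacobiPoly β n).eval (1 - t) ^ 2 ^ (j + 1 + 1) ≤
          ∑ k ∈ Finset.range (2 * n + 1), c k *
            (t ^ (2 ^ j * (2 * β)) * (jacobiPoly (2 * β) k).eval (1 - t) ^ 2 ^ (j + 1)) := by
      intro t ht
      have h := Real.pow_arith_mean_le_arith_mean_pow_of_even (Finset.range (2 * n + 1)) c
        (fun k => (jacobiPoly (2 * β) k).eval (1 - t)) hc0 hc1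
        (show Even (2 ^ (j + 1)) from (even_two.pow_of_ne_zero (Nat.succ_ne_zero j)))
      have hc' := congrArg (eval (1 - t)) hc
      simp only [eval_pow, eval_finsetSum, eval_mul, eval_C] at hc'
      rw [← hc'] at h
      rw [show (2 : ℝ) ^ (j + 1) * β = 2 ^ j * (2 * β) by ring, pow_succ' 2 (j + 1), pow_mul]
      refine (mul_le_mul_of_nonneg_left h (Real.rpow_nonneg ht.1 _)).trans_eq ?_
      rw [Finset.mul_sum]
      exact Finset.sum_congr rfl fun k _ => mul_left_comm _ _ _
    refine (intervalIntegral.integral_mono_on zero_le_one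
      ((hcont (by positivity) _ _).intervalIntegrable 0 1)
      ((continuous_finsetSum _ fun k _ => (hcont' k).const_mul (c k)).intervalIntegrable 0 1)
      hle).trans ?_
    rw [intervalIntegral.integral_finsetSum fun k _ =>
      ((hcont' k).const_mul (c k)).intervalIntegrable 0 1]
    refine (Finset.sum_le_sum fun k hk => ?_).trans_eq hc1
    rw [intervalIntegral.integral_const_mul]
    exact mul_le_of_le_one_right (hc0 k hk) (ih (by positivity) k)

theorem le_one_of_integral_pow_le_one {g : ℝ → ℝ} (hg : Continuous g)
    (hg0 : ∀ t ∈ Set.Icc (0 : ℝ) 1, 0 ≤ g t)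
    (hint : ∀ j : ℕ, ∫ t in (0 : ℝ)..1, g t ^ 2 ^ j ≤ 1) {x : ℝ} (hx : x ∈ Set.Ico (0 : ℝ) 1) :
    g x ≤ 1 := by
  by_contra! h
  obtain ⟨c, hc1, hcg⟩ := exists_between h
  obtain ⟨y, hxy, hy⟩ : ∃ y ∈ Set.Ioi x, Set.Icc x y ⊆ {t | c < g t} := by
    have h1 : ∀ᶠ t in nhds x, c < g t := (hg.tendsto x).eventually_const_lt hcg
    exact mem_nhdsGE_iff_exists_Icc_subset.mp (nhdsWithin_le_nhds h1)
  set z := min y 1 with hz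
  have hxz : x < z := lt_min hxy hx.2
  obtain ⟨m, hm⟩ := pow_unbounded_of_one_lt (1 / (z - x)) hc1
  have hcont : Continuous fun t => g t ^ 2 ^ m := hg.pow _
  have h1 : ∫ _ in x..z, c ^ 2 ^ m ≤ ∫ t in x..z, g t ^ 2 ^ m :=
    intervalIntegral.integral_mono_on hxz.le intervalIntegrable_const
      (hcont.intervalIntegrable _ _) fun t ht =>
        pow_le_pow_left₀ (by linarith) (hy ⟨ht.1, ht.2.trans (min_le_left _ _)⟩).le _
  have h2 : ∫ t in x..z, g t ^ 2 ^ m ≤ ∫ t in (0 : ℝ)..1, g t ^ 2 ^ m := by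
    refine intervalIntegral.integral_mono_interval hx.1 hxz.le (min_le_right _ _) ?_
      (hcont.intervalIntegrable _ _)
    refine (MeasureTheory.ae_restrict_mem measurableSet_Ioc).mono fun t ht => ?_
    exact pow_nonneg (hg0 t ⟨ht.1.le, ht.2⟩) _
  rw [intervalIntegral.integral_const, smul_eq_mul] at h1
  have h3 : c ^ m ≤ c ^ 2 ^ m := pow_le_pow_right₀ hc1.le Nat.lt_two_pow_self.le
  have h4 : 1 < (z - x) * c ^ m := by
    rwa [div_lt_iff₀' (sub_pos.mpr hxz)] at hm
  have h5 := mul_le_mul_of_nonneg_left h3 (sub_pos.mpr hxz).le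
  linarith [hint m]

theorem rpow_mul_abs_jacobiPoly_le {β : ℝ} (hβ : 0 ≤ β) (n : ℕ) {t : ℝ}
    (ht : t ∈ Set.Icc (0 : ℝ) 1) : t ^ (β / 2) * |(jacobiPoly β n).eval (1 - t)| ≤ 1 := by
  rcases ht.2.eq_or_lt with rfl | h1
  · simp [jacobiPoly_eval_zero]
  have h := le_one_of_integral_pow_le_one
    (g := fun t => t ^ β * (jacobiPoly β n ^ 2).eval (1 - t)) (continuous_rpow_mul_eval hβ _)
    (fun t ht => mul_nonneg (Real.rpow_nonneg ht.1 _) (by rw [eval_pow]; positivity))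
    (fun j => by
      refine le_of_eq_of_le (intervalIntegral.integral_congr fun t ht => ?_)
        (integral_rpow_mul_jacobiPoly_pow_le hβ n j)
      rw [Set.uIcc_of_le zero_le_one] at ht
      simp only [eval_pow]
      rw [mul_pow, ← pow_mul, ← pow_succ', mul_comm _ β, Real.rpow_mul ht.1]
      norm_cast) ⟨ht.1, h1⟩
  refine (sq_le_one_iff₀ (mul_nonneg (Real.rpow_nonneg ht.1 _) (abs_nonneg _))).mp ?_
  rw [mul_pow, sq_abs, ← Real.rpow_mul_natCast ht.1, Nat.cast_two, div_mul_cancel₀ _ two_ne_zero]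
  simpa only [eval_pow] using h

/-- The homogenization of `jacobiPoly β n`. -/
noncomputable def jacobiForm (β : ℝ) (n : ℕ) (t s : ℝ) : ℝ :=
  ∑ ab ∈ Finset.HasAntidiagonal.antidiagonal n,
    ((-1) ^ ab.1 * (n.choose ab.1 : ℝ) * genChoose (n + β) ab.1) * (s ^ ab.1 * t ^ ab.2)

theorem jacobiForm_one_sub (β : ℝ) (n : ℕ) (s : ℝ) :
    jacobiForm β n (1 - s) s = (jacobiPoly β n).eval s := by
  simp [jacobiForm, jacobiPoly, eval_finsetSum]

theorem jacobiForm_mul (β : ℝ) (n : ℕ) (r t s : ℝ) :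
    jacobiForm β n (r * t) (r * s) = r ^ n * jacobiForm β n t s := by
  rw [jacobiForm, jacobiForm, Finset.mul_sum]
  refine Finset.sum_congr rfl fun ab hab => ?_
  rw [← Finset.HasAntidiagonal.mem_antidiagonal.mp hab]
  ring

theorem rpow_mul_abs_jacobiForm_le {β : ℝ} (hβ : 0 ≤ β) (n : ℕ) {t s : ℝ} (ht : 0 ≤ t)
    (hs : 0 ≤ s) (hts : t + s ≤ 1) : t ^ (β / 2) * |jacobiForm β n t s| ≤ 1 := by
  obtain ⟨r, u, hr, hu, rfl, rfl⟩ : ∃ r u : ℝ, r ∈ Set.Icc (0 : ℝ) 1 ∧ u ∈ Set.Icc (0 : ℝ) 1 ∧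
      t = r * u ∧ s = r * (1 - u) := by
    rcases (add_nonneg ht hs).eq_or_lt with h | h
    · exact ⟨0, 0, by simp, by simp, by linarith, by linarith⟩
    · refine ⟨t + s, t / (t + s), ⟨h.le, hts⟩, ⟨by positivity, ?_⟩, ?_, ?_⟩
      · rw [div_le_one h]; linarith
      · field_simp
      · field_simp; ring
  have h := rpow_mul_abs_jacobiPoly_le hβ n hu
  rw [← jacobiForm_one_sub, sub_sub_cancel] at h
  rw [jacobiForm_mul, abs_mul, abs_pow, abs_of_nonneg hr.1, Real.mul_rpow hr.1 hu.1,
    mul_mul_mul_comm]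
  have h1 : r ^ (β / 2) ≤ 1 := Real.rpow_le_one hr.1 hr.2 (by positivity)
  have h2 : r ^ n ≤ 1 := pow_le_one₀ hr.1 hr.2
  exact mul_le_one₀ (mul_le_one₀ h1 (pow_nonneg hr.1 _) h2)
    (mul_nonneg (Real.rpow_nonneg hu.1 _) (abs_nonneg _)) h

theorem genChoose_pos {t : ℝ} {j : ℕ} (h : (j : ℝ) < t + 1) : 0 < genChoose t j := by
  refine div_pos (Finset.prod_pos fun i hi => ?_) (by positivity)
  have : (i : ℝ) + 1 ≤ j := by exact_mod_cast Finset.mem_range.mp hi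
  linarith

theorem genChoose_add_mul (α : ℝ) (a b : ℕ) :
    genChoose ((a + b : ℕ) + α) b * genChoose (a + α) a =
      (a + b).choose a * genChoose ((a + b : ℕ) + α) (a + b) := by
  have h : ∏ i ∈ Finset.range (a + b), (((a + b : ℕ) : ℝ) + α - i) =
      (∏ i ∈ Finset.range b, (((a + b : ℕ) : ℝ) + α - i)) *
        ∏ i ∈ Finset.range a, ((a : ℝ) + α - i) := by
    conv_lhs => rw [add_comm a b, Finset.prod_range_add]
    push_cast
    congr 1
    · exact Finset.prod_congr rfl fun i _ => by ring
    · exact Finset.prod_congr rfl fun i _ => by ring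
  rw [genChoose, genChoose, genChoose, h, Nat.cast_add_choose]
  have ha : (a.factorial : ℝ) ≠ 0 := by positivity
  have hb : (b.factorial : ℝ) ≠ 0 := by positivity
  have hab : ((a + b).factorial : ℝ) ≠ 0 := by positivity
  field_simp

theorem genChoose_add_one_succ (t : ℝ) (j : ℕ) :
    (j + 1) * genChoose (t + 1) (j + 1) = (t + 1) * genChoose t j := by
  have : (j.factorial : ℝ) ≠ 0 := by positivity
  rw [genChoose, genChoose, Finset.prod_range_succ', Nat.factorial_succ]
  push_cast
  simp only [add_sub_add_right_eq_sub, sub_zero]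
  field_simp

theorem jacobi_eq_sum {α : ℝ} (hα : 0 ≤ α) (β : ℝ) (n : ℕ) (s : ℝ) :
    jacobi α β n (1 - 2 * s) = genChoose (n + α) n *
      ∑ ab ∈ Finset.HasAntidiagonal.antidiagonal n,
        ((-1) ^ ab.1 * (n.choose ab.1 : ℝ) * genChoose (n + β) ab.1) *
          (s ^ ab.1 * (1 - s) ^ ab.2) * (genChoose (ab.1 + α) ab.1)⁻¹ := by
  rw [jacobi, Finset.Nat.sum_antidiagonal_eq_sum_range_succ_mk, Finset.mul_sum]
  refine Finset.sum_congr rfl fun a ha => ?_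
  obtain ⟨b, rfl⟩ := Nat.exists_eq_add_of_le (Nat.lt_succ_iff.mp (Finset.mem_range.mp ha))
  have h0 : genChoose (a + α) a ≠ 0 := (genChoose_pos (by linarith)).ne'
  have h := genChoose_add_mul α a b
  rw [← eq_div_iff h0] at h
  simp only [Nat.add_sub_cancel_left]
  rw [h, show (1 - 2 * s - 1) / 2 = (-1) * s by ring, show (1 - 2 * s + 1) / 2 = 1 - s by ring,
    mul_pow]
  ring

theorem integral_rpow_mul_one_sub_pow {α : ℝ} (hα : 0 < α) (j : ℕ) :
    ∫ v in (0 : ℝ)..1, v ^ (α - 1) * (1 - v) ^ j = α⁻¹ * (genChoose (j + α) j)⁻¹ := by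
  induction j generalizing α with
  | zero =>
    simp only [pow_zero, mul_one, genChoose_zero, inv_one]
    rw [integral_rpow (Or.inl (by linarith))]
    simp [hα.ne']
  | succ j ih =>
    have hint : ∀ γ : ℝ, 0 < γ → IntervalIntegrable (fun v : ℝ => v ^ (γ - 1) * (1 - v) ^ j)
        MeasureTheory.volume 0 1 := fun γ hγ =>
      (intervalIntegral.intervalIntegrable_rpow' (by linarith)).mul_continuousOn
        (by fun_prop)
    have h : ∫ v in (0 : ℝ)..1, v ^ (α - 1) * (1 - v) ^ (j + 1) =
        (∫ v in (0 : ℝ)..1, v ^ (α - 1) * (1 - v) ^ j) -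
          ∫ v in (0 : ℝ)..1, v ^ (α + 1 - 1) * (1 - v) ^ j := by
      rw [← intervalIntegral.integral_sub (hint α hα) (hint (α + 1) (by linarith))]
      refine intervalIntegral.integral_congr fun v hv => ?_
      rw [Set.uIcc_of_le zero_le_one] at hv
      have h1 : v ^ (α + 1 - 1) = v ^ (α - 1) * v := by
        rw [← Real.rpow_add_one' hv.1 (by linarith)]
        congr 1
        ring
      rw [h1]
      ring
    have hj : (0 : ℝ) ≤ j := j.cast_nonneg
    have p0 : 0 < genChoose (j + α) j := genChoose_pos (by linarith)
    have p1 : 0 < genChoose (j + α + 1) j := genChoose_pos (by linarith)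
    have p2 : 0 < genChoose (j + α + 1) (j + 1) := genChoose_pos (by push_cast; linarith)
    have e1 := genChoose_add_one_succ (j + α) j
    have e2 := genChoose_succ (j + α + 1) j
    rw [h, ih hα, ih (by linarith), ← add_assoc]
    rw [show ((j + 1 : ℕ) : ℝ) + α = j + α + 1 by push_cast; ring]
    have q0 : genChoose (j + α) j = (j + 1) * genChoose (j + α + 1) (j + 1) / (j + α + 1) := by
      rw [e1]; field_simp
    have q1 : genChoose (j + α + 1) j = (j + 1) * genChoose (j + α + 1) (j + 1) / (α + 1) := by
      rw [e2, eq_div_iff (by linarith)]; ring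
    rw [q0, q1]
    field_simp
    ring

theorem sum_eq_integral_jacobiForm {α : ℝ} (hα : 0 < α) (β : ℝ) (n : ℕ) (t s : ℝ) :
    ∑ ab ∈ Finset.HasAntidiagonal.antidiagonal n,
        ((-1) ^ ab.1 * (n.choose ab.1 : ℝ) * genChoose (n + β) ab.1) *
          (s ^ ab.1 * t ^ ab.2) * (genChoose (ab.1 + α) ab.1)⁻¹ =
      ∫ v in (0 : ℝ)..1, α * v ^ (α - 1) * jacobiForm β n t (s * (1 - v)) := by
  have h : ∀ v : ℝ, α * v ^ (α - 1) * jacobiForm β n t (s * (1 - v)) =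
      ∑ ab ∈ Finset.HasAntidiagonal.antidiagonal n,
        (α * (((-1) ^ ab.1 * (n.choose ab.1 : ℝ) * genChoose (n + β) ab.1) *
          (s ^ ab.1 * t ^ ab.2))) * (v ^ (α - 1) * (1 - v) ^ ab.1) := fun v => by
    rw [jacobiForm, Finset.mul_sum]
    exact Finset.sum_congr rfl fun ab _ => by rw [mul_pow]; ring
  simp only [h]
  rw [intervalIntegral.integral_finsetSum]
  · refine Finset.sum_congr rfl fun ab _ => ?_
    rw [intervalIntegral.integral_const_mul, integral_rpow_mul_one_sub_pow hα]
    field_simp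
  · intro ab _
    exact ((intervalIntegral.intervalIntegrable_rpow' (by linarith)).mul_continuousOn
      (by fun_prop)).const_mul _

theorem rpow_mul_abs_jacobi_le {α β : ℝ} (hα : 0 ≤ α) (hβ : 0 ≤ β) (n : ℕ) {s : ℝ}
    (hs : s ∈ Set.Icc (0 : ℝ) 1) :
    (1 - s) ^ (β / 2) * |jacobi α β n (1 - 2 * s)| ≤ genChoose (n + α) n := by
  have hn : 0 < genChoose (n + α) n := genChoose_pos (by linarith)
  have ht : 0 ≤ 1 - s := by linarith [hs.2]
  rw [jacobi_eq_sum hα, abs_mul, abs_of_pos hn, mul_left_comm]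
  refine mul_le_of_le_one_right hn.le ?_
  rcases hα.eq_or_lt with rfl | hα
  · have h1 : ∀ a : ℕ, genChoose (a + 0) a = 1 := fun a => by
      induction a with
      | zero => exact genChoose_zero _
      | succ a ih =>
        have h := genChoose_add_one_succ (a + 0) a
        rw [ih, mul_one, add_zero] at h
        rw [Nat.cast_succ, add_zero]
        have : (a : ℝ) + 1 ≠ 0 := by positivity
        exact mul_left_cancel₀ this (h.trans (mul_one _).symm)
    simp only [h1, inv_one, mul_one]
    exact rpow_mul_abs_jacobiForm_le hβ n ht hs.1 (by linarith)
  · rw [sum_eq_integral_jacobiForm hα, ← abs_of_nonneg (Real.rpow_nonneg ht (β / 2)), ← abs_mul,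
      ← intervalIntegral.integral_const_mul]
    have hint : IntervalIntegrable (fun v : ℝ => α * v ^ (α - 1)) MeasureTheory.volume 0 1 :=
      (intervalIntegral.intervalIntegrable_rpow' (by linarith)).const_mul _
    have hone : ∫ v in (0 : ℝ)..1, α * v ^ (α - 1) = 1 := by
      rw [intervalIntegral.integral_const_mul, integral_rpow (Or.inl (by linarith))]
      simp [hα.ne']
    rw [← Real.norm_eq_abs]
    refine (intervalIntegral.norm_integral_le_of_norm_le
      (f := fun v : ℝ => (1 - s) ^ (β / 2) *
        (α * v ^ (α - 1) * jacobiForm β n (1 - s) (s * (1 - v)))) zero_le_one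
      (Filter.Eventually.of_forall fun v hv => ?_) hint).trans_eq hone
    have hv0 : 0 ≤ α * v ^ (α - 1) := mul_nonneg hα.le (Real.rpow_nonneg hv.1.le _)
    have hv1 : 0 ≤ 1 - v := by linarith [hv.2]
    have h := rpow_mul_abs_jacobiForm_le hβ n ht (mul_nonneg hs.1 hv1)
      (by nlinarith [mul_nonneg hs.1 hv.1.le])
    rw [mul_left_comm, Real.norm_eq_abs, abs_mul, abs_of_nonneg hv0, abs_mul,
      abs_of_nonneg (Real.rpow_nonneg ht _)]
    exact mul_le_of_le_one_right hv0 h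

end Jacobi

theorem stmt5 (β : ℝ) (hβ : 0 ≤ β) (α : ℝ) (hα : β - (⌊β⌋ : ℝ) ≤ α) (n : ℕ)
    (x : ℝ) (hx : x ∈ Set.Icc (-1 : ℝ) 1) :
    ((1 + x) / 2) ^ (β / 2) * |jacobi α β n x| ≤ genChoose ((n : ℝ) + α) n := by
  have hα0 : 0 ≤ α := (sub_nonneg.mpr (Int.floor_le β)).trans hα
  have h := rpow_mul_abs_jacobi_le hα0 hβ n (s := (1 - x) / 2)
    ⟨by linarith [hx.2], by linarith [hx.1]⟩
  rwa [show 1 - (1 - x) / 2 = (1 + x) / 2 by ring, show 1 - 2 * ((1 - x) / 2) = x by ring] at h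
end
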